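/- In the tower construction with D := ⋃_{n≥1} Dₙ and 𝓜 := ⋃_{n≥2} 𝓜ₙ, for every prime ideal q of D with q ≠ 𝓜, the localization D_q is a valuation domain of Krull dimension ≤ r; more precisely, choosing m ≥ 2 with q_m := q ∩ D_m ≠ 𝓜_m, one has D_q = (D_m)_{q_m}(X′_{m+1}, X′_{m+2}, …), the Nagata ring of (D_m)_{q_m} in the variables X′_{m+1}, X′_{m+2}, …. -/

import Mathlib

/- Preamble: the tower construction of Fontana–Kabbaj (Example 3.1).
All rings are realized as subsets/subrings of one ambient field `Amb k0 r`:
the rational function field over `k0` in the indeterminates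
`X₁, X₂, …` (indexed by `ℕ`), `Y`, and `Z₁, …, Z_{r-1}`. -/

noncomputable section

open Polynomial

/-- Index type for the indeterminates: `Sum.inl n` is `Xₙ`, `Sum.inr (Sum.inl ())` is `Y`,
and `Sum.inr (Sum.inr i)` is `Z_{i+1}`. -/
abbrev TowerVars (r : ℕ) : Type := ℕ ⊕ (Unit ⊕ Fin (r - 1))

/-- The ambient field: the fraction field of the polynomial ring over `k0` in all the
indeterminates. -/
abbrev Amb (k0 : Type) [Field k0] (r : ℕ) : Type :=
  FractionRing (MvPolynomial (TowerVars r) k0)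

variable (k0 : Type) [Field k0] (r : ℕ)

/-- The indeterminate `Xₙ` as an element of the ambient field. -/
def ambX (n : ℕ) : Amb k0 r :=
  algebraMap (MvPolynomial (TowerVars r) k0) (Amb k0 r) (MvPolynomial.X (Sum.inl n))

/-- The indeterminate `Y` as an element of the ambient field. -/
def ambY : Amb k0 r :=
  algebraMap (MvPolynomial (TowerVars r) k0) (Amb k0 r) (MvPolynomial.X (Sum.inr (Sum.inl ())))

/-- The indeterminates `Z₁, …, Z_{r-1}` as elements of the ambient field. -/
def ambZ (i : Fin (r - 1)) : Amb k0 r :=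
  algebraMap (MvPolynomial (TowerVars r) k0) (Amb k0 r) (MvPolynomial.X (Sum.inr (Sum.inr i)))

/-- The image of the base field `k0` in the ambient field. -/
def baseSet : Set (Amb k0 r) :=
  Set.range fun c : k0 => algebraMap (MvPolynomial (TowerVars r) k0) (Amb k0 r) (MvPolynomial.C c)

/-- `kₙ := k0(X₁, …, Xₙ)` as a subfield of the ambient field. -/
def kfld (n : ℕ) : Subfield (Amb k0 r) :=
  Subfield.closure (baseSet k0 r ∪ {x | ∃ i, 1 ≤ i ∧ i ≤ n ∧ x = ambX k0 r i})

/-- `Fₙ := kₙ(Z₁, …, Z_{r-1})`. -/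
def Ffld (n : ℕ) : Subfield (Amb k0 r) :=
  Subfield.closure (↑(kfld k0 r n) ∪ Set.range (ambZ k0 r))

/-- `Kₙ := Fₙ(Y)`. -/
def Kfld (n : ℕ) : Subfield (Amb k0 r) :=
  Subfield.closure (↑(Ffld k0 r n) ∪ {ambY k0 r})

/-- The polynomial ring `Fₙ[Y]` as a subring of the ambient field. -/
def polyRing (n : ℕ) : Subring (Amb k0 r) :=
  Subring.closure (↑(Ffld k0 r n) ∪ {ambY k0 r})

/-- `Vₙ := Fₙ[Y]_{(Y)}`, the localization of `Fₙ[Y]` at the prime `(Y)`, as a subset of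
the ambient field. -/
def Vset (n : ℕ) : Set (Amb k0 r) :=
  {x | ∃ f ∈ polyRing k0 r n, ∃ g ∈ polyRing k0 r n,
    (¬ ∃ h ∈ polyRing k0 r n, g = ambY k0 r * h) ∧ x = f / g}

/-- `Mₙ := Y·Fₙ[Y]_{(Y)}`, the maximal ideal of `Vₙ`. -/
def Mset (n : ℕ) : Set (Amb k0 r) :=
  {x | ∃ v ∈ Vset k0 r n, x = ambY k0 r * v}

/-- `Aₙ := kₙ + Mₙ`. -/
def Aset (n : ℕ) : Set (Amb k0 r) :=
  {x | ∃ c ∈ kfld k0 r n, ∃ m ∈ Mset k0 r n, x = c + m}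

/-- `k := ⋃ₙ kₙ` as a subset of the ambient field. -/
def kfldU : Set (Amb k0 r) := ⋃ n, (kfld k0 r n : Set (Amb k0 r))

/-- `F := k(Z₁, …, Z_{r-1}) = ⋃ₙ Fₙ`. -/
def FfldU : Subfield (Amb k0 r) :=
  Subfield.closure (kfldU k0 r ∪ Set.range (ambZ k0 r))

/-- `K := F(Y) = ⋃ₙ Kₙ`. -/
def KfldU : Subfield (Amb k0 r) :=
  Subfield.closure (↑(FfldU k0 r) ∪ {ambY k0 r})

/-- The polynomial ring `F[Y]`. -/
def polyRingU : Subring (Amb k0 r) :=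
  Subring.closure (↑(FfldU k0 r) ∪ {ambY k0 r})

/-- `V := F[Y]_{(Y)}`. -/
def VsetU : Set (Amb k0 r) :=
  {x | ∃ f ∈ polyRingU k0 r, ∃ g ∈ polyRingU k0 r,
    (¬ ∃ h ∈ polyRingU k0 r, g = ambY k0 r * h) ∧ x = f / g}

/-- `M := Y·F[Y]_{(Y)} = ⋃ₙ Mₙ`. -/
def MsetU : Set (Amb k0 r) :=
  {x | ∃ v ∈ VsetU k0 r, x = ambY k0 r * v}

/-- `A := k + M = ⋃ₙ Aₙ`. -/
def AsetU : Set (Amb k0 r) :=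
  {x | ∃ c ∈ kfldU k0 r, ∃ m ∈ MsetU k0 r, x = c + m}

/-- `X′ₙ := (1 + Y·Xₙ)/Y`. -/
def ambX' (n : ℕ) : Amb k0 r :=
  (1 + ambY k0 r * ambX k0 r n) / ambY k0 r

/-- `1` belongs to the ideal of `W` generated by the coefficients of `g`, where `W` is a
subring (given as a subset `S`) of the ambient field. -/
def unitContent (S : Set (Amb k0 r)) (g : Polynomial (Amb k0 r)) : Prop :=
  ∃ (t : Finset ℕ) (u : ℕ → Amb k0 r), (∀ i ∈ t, u i ∈ S) ∧ ∑ i ∈ t, u i * g.coeff i = 1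

/-- The Nagata ring `W(T)` of a subring `W ⊆ Amb k0 r` (given as a subset `S`) in the
"variable" `T`: all fractions `f(T)/g(T)` with `f, g ∈ W[T]` and the coefficients of `g`
generating the unit ideal of `W`.  (When `T` is transcendental over `W` this is the usual
Nagata ring.) -/
def nagataSet (S : Set (Amb k0 r)) (T : Amb k0 r) : Set (Amb k0 r) :=
  {x | ∃ f g : Polynomial (Amb k0 r), (∀ i, f.coeff i ∈ S) ∧ (∀ i, g.coeff i ∈ S) ∧
    unitContent k0 r S g ∧ x = f.eval T / g.eval T}

/-- The valuation overrings of a ring `D` (given as a subset) inside a subfield `L` of the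
ambient field: subrings `W` with `D ⊆ W ⊆ L` such that for every `x ∈ L`, `x ∈ W` or
`x⁻¹ ∈ W`. -/
def valOverringsIn (D : Set (Amb k0 r)) (L : Subfield (Amb k0 r)) : Set (Subring (Amb k0 r)) :=
  {W | D ⊆ ↑W ∧ (W : Set (Amb k0 r)) ⊆ (L : Set (Amb k0 r)) ∧ ∀ x ∈ L, x ∈ W ∨ x⁻¹ ∈ W}

/-- The Kronecker function ring `Kr_{L(T)}(D, b) = ⋂ {W(T) : W a valuation overring of `D`
in `L`}`, realized as a subset of the ambient field. -/
def krSet (D : Set (Amb k0 r)) (L : Subfield (Amb k0 r)) (T : Amb k0 r) : Set (Amb k0 r) :=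
  ⋂ W ∈ valOverringsIn k0 r D L, nagataSet k0 r (↑W) T

/-- The tower `Dₙ`: `D₁ := A₁` and `Dₙ := Bₙ ∩ Aₙ` for `n ≥ 2`, where
`Bₙ := Kr_{K_{n-1}(X′ₙ)}(D_{n-1}, b)`.  (The value at `0` is junk, set to `D₁`.) -/
def Dset : ℕ → Set (Amb k0 r)
  | 0 => Aset k0 r 1
  | 1 => Aset k0 r 1
  | n + 2 => krSet k0 r (Dset (n + 1)) (Kfld k0 r (n + 1)) (ambX' k0 r (n + 2)) ∩ Aset k0 r (n + 2)

/-- `Bₙ := Kr_{K_{n-1}(X′ₙ)}(D_{n-1}, b)` (meaningful for `n ≥ 2`). -/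
def Bset (n : ℕ) : Set (Amb k0 r) :=
  krSet k0 r (Dset k0 r (n - 1)) (Kfld k0 r (n - 1)) (ambX' k0 r n)

/-- `𝓜ₙ := Mₙ ∩ Dₙ`. -/
def MMset (n : ℕ) : Set (Amb k0 r) := Mset k0 r n ∩ Dset k0 r n

/-- `D := ⋃__{n ≥ 1} Dₙ`. -/
def DsetU : Set (Amb k0 r) := ⋃ n, Dset k0 r n

/-- `𝓜 := ⋃_{n ≥ 2} 𝓜ₙ`. -/
def MMsetU : Set (Amb k0 r) := ⋃ n, MMset k0 r (n + 2)

/-- The localization `D_m = {a/b : a, b ∈ D, b ∉ m}` of a subring `D` of the ambient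
field (given as a subset) at (the complement of) a subset `m`. -/
def locAt (D m : Set (Amb k0 r)) : Set (Amb k0 r) :=
  {x | ∃ a ∈ D, ∃ b ∈ D, b ∉ m ∧ x = a / b}

/-- The quotient field, inside the ambient field, of a subring given as a subset. -/
def qfSet (D : Set (Amb k0 r)) : Set (Amb k0 r) :=
  {x | ∃ a ∈ D, ∃ b ∈ D, b ≠ 0 ∧ x = a / b}

/-- The nonunits of a subring of the ambient field, given as a subset: in a local
subring of a field these form the maximal ideal. -/
def nonunitsIn (S : Set (Amb k0 r)) : Set (Amb k0 r) :=
  {x | x ∈ S ∧ (x = 0 ∨ x⁻¹ ∉ S)}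

/-- A subring `A` of the ambient field is a pseudo-valuation domain: it is local, and its
maximal ideal (= set of nonunits) is also the maximal ideal of some valuation overring of
`A` in its quotient field. -/
def IsPVDSub (A : Subring (Amb k0 r)) : Prop :=
  IsLocalRing ↥A ∧
  ∃ W : Subring (Amb k0 r), (A : Set (Amb k0 r)) ⊆ ↑W ∧
    (W : Set (Amb k0 r)) ⊆ qfSet k0 r ↑A ∧
    (∀ x ∈ qfSet k0 r (A : Set (Amb k0 r)), x ∈ W ∨ x⁻¹ ∈ W) ∧
    nonunitsIn k0 r ↑A = nonunitsIn k0 r ↑W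

/-- The valuative dimension of a subring of the ambient field: the supremum of the Krull
dimensions of its valuation overrings (in its quotient field). -/
def subValuativeDim (A : Subring (Amb k0 r)) : WithBot ℕ∞ :=
  ⨆ W : {W : Subring (Amb k0 r) // (A : Set (Amb k0 r)) ⊆ ↑W ∧
      (W : Set (Amb k0 r)) ⊆ qfSet k0 r ↑A ∧
      ∀ x ∈ qfSet k0 r (A : Set (Amb k0 r)), x ∈ W ∨ x⁻¹ ∈ W},
    ringKrullDim ↥(W : Subring (Amb k0 r))

/-- `1` belongs to the ideal generated by the coefficients of a multivariable polynomial
`g` in the subring given by the subset `S`. -/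
def mvUnitContent (S : Set (Amb k0 r)) (g : MvPolynomial ℕ (Amb k0 r)) : Prop :=
  ∃ (t : Finset (ℕ →₀ ℕ)) (u : (ℕ →₀ ℕ) → Amb k0 r),
    (∀ m ∈ t, u m ∈ S) ∧ ∑ m ∈ t, u m * MvPolynomial.coeff m g = 1

/-- The Nagata ring `W(T₀, T₁, …)` of a subring `W` of the ambient field (given as a
subset `S`) in countably many "variables" `T j`: all fractions `f(T)/g(T)` with
`f, g ∈ W[T₀, T₁, …]` and the coefficients of `g` generating the unit ideal of `W`. -/
def nagataSetMv (S : Set (Amb k0 r)) (T : ℕ → Amb k0 r) : Set (Amb k0 r) :=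
  {x | ∃ f g : MvPolynomial ℕ (Amb k0 r),
    (∀ m, MvPolynomial.coeff m f ∈ S) ∧ (∀ m, MvPolynomial.coeff m g ∈ S) ∧
    mvUnitContent k0 r S g ∧ x = MvPolynomial.eval T f / MvPolynomial.eval T g}

/-- A subring `S` of the ambient field is an *essential* domain: `S` is the intersection
of a family of localizations `S_p` at primes `p ∈ Δ`, each of which is a valuation domain
(with quotient field the quotient field of `S`). -/
def IsEssentialSub (S : Subring (Amb k0 r)) : Prop :=
  ∃ Δ : Set (Ideal ↥S),
    (∀ p ∈ Δ, p.IsPrime) ∧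
    (∀ p ∈ Δ, ∀ x ∈ qfSet k0 r (S : Set (Amb k0 r)),
      x ∈ locAt k0 r ↑S (Subtype.val '' (p : Set ↥S)) ∨
      x⁻¹ ∈ locAt k0 r ↑S (Subtype.val '' (p : Set ↥S))) ∧
    (S : Set (Amb k0 r)) = ⋂ p ∈ Δ, locAt k0 r ↑S (Subtype.val '' (p : Set ↥S))

end

/-!
Fix a level `n` of the tower and write `T = X′ₙ`. Its inverse lies in the maximal ideal `𝓜ₙ`, while
`T · Mₙ² ⊆ Aₙ`. A prime of `Dₙ` containing `T⁻¹` is therefore `𝓜ₙ` itself. At any other prime, `T⁻¹`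
is inverted, so the localization is an overring of the Kronecker function ring `Bₙ` of `Dₙ₋₁`; as
such it is a valuation ring, and it is the Nagata ring in `T` of its trace on `Kₙ₋₁`, which is a
localization of `Dₙ₋₁`. Iterating and passing to the union, a prime `q ≠ 𝓜` of `D` misses `𝓜ₘ` at
some level `m`, and from there on every localization is the Nagata ring, in one more variable, of
the preceding one.

As to dimension, the primes of the Nagata ring of a valuation ring come from the base ring, so it
is enough to bound the dimension of the valuation overrings of `Dₙ` in `Kₙ`. Such a ring either
comes from level `n - 1` or contains `kₙ`, and in the latter case its dimension is at most the
transcendence degree `r` of `Kₙ` over `kₙ`.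
-/

noncomputable section

open Polynomial IsLocalRing IntermediateField

universe u

variable {L : Type*} [Field L]

section Nagata

/-- The Nagata ring `R(T)` of a subring `R` of a field `L` at an element `T` of `L`: the fractions
`f(T) / g(T)` with `f, g ∈ R[X]` and the coefficients of `g` generating the unit ideal of `R`. The
condition `g(T) ≠ 0`, automatic when `T` is transcendental over `R`, excludes division by zero. -/
def nagataRing (R : Subring L) (T : L) : Subring L where
  carrier := {x | ∃ f g : R[X], g.contentIdeal = ⊤ ∧ aeval T g ≠ 0 ∧ x = aeval T f / aeval T g}
  zero_mem' := ⟨0, 1, contentIdeal_one, by simp, by simp⟩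
  one_mem' := ⟨1, 1, contentIdeal_one, by simp, by simp⟩
  add_mem' := by
    rintro _ _ ⟨f₁, g₁, h₁, hT₁, rfl⟩ ⟨f₂, g₂, h₂, hT₂, rfl⟩
    refine ⟨f₁ * g₂ + g₁ * f₂, g₁ * g₂,
      contentIdeal_mul_eq_top_of_contentIdeal_eq_top h₁ h₂, ?_, ?_⟩
    · simpa only [map_mul] using mul_ne_zero hT₁ hT₂
    · simp only [map_add, map_mul, div_add_div _ _ hT₁ hT₂]
  mul_mem' := by
    rintro _ _ ⟨f₁, g₁, h₁, hT₁, rfl⟩ ⟨f₂, g₂, h₂, hT₂, rfl⟩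
    refine ⟨f₁ * f₂, g₁ * g₂,
      contentIdeal_mul_eq_top_of_contentIdeal_eq_top h₁ h₂, ?_, ?_⟩
    · simpa only [map_mul] using mul_ne_zero hT₁ hT₂
    · simp only [map_mul, div_mul_div_comm]
  neg_mem' := by
    rintro _ ⟨f, g, h, hT, rfl⟩
    exact ⟨-f, g, h, hT, by simp only [map_neg, neg_div]⟩

variable {R : Subring L} {T : L}

theorem mem_nagataRing {x : L} : x ∈ nagataRing R T ↔
    ∃ f g : R[X], g.contentIdeal = ⊤ ∧ aeval T g ≠ 0 ∧ x = aeval T f / aeval T g :=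
  Iff.rfl

theorem le_nagataRing : R ≤ nagataRing R T := fun x hx =>
  ⟨C ⟨x, hx⟩, 1, contentIdeal_one, by simp, by rw [map_one, div_one, aeval_C]; rfl⟩

theorem self_mem_nagataRing : T ∈ nagataRing R T :=
  ⟨X, 1, contentIdeal_one, by simp, by simp⟩

theorem contentIdeal_eq_top_of_isUnit_coeff {R : Type*} [CommRing R] {g : R[X]} {i : ℕ}
    (h : IsUnit (g.coeff i)) : g.contentIdeal = ⊤ :=
  Ideal.eq_top_of_isUnit_mem _ (g.coeff_mem_contentIdeal i) h

theorem exists_isUnit_coeff_of_contentIdeal_eq_top {R : Type*} [CommRing R] [IsLocalRing R]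
    {g : R[X]} (h : g.contentIdeal = ⊤) : ∃ i, IsUnit (g.coeff i) := by
  by_contra! hg
  refine (maximalIdeal.isMaximal R).ne_top (top_le_iff.mp (h ▸ Ideal.span_le.mpr ?_))
  intro a ha
  obtain ⟨i, -, rfl⟩ := mem_coeffs_iff.mp (Finset.mem_coe.mp ha)
  exact (mem_maximalIdeal _).mpr (hg i)

end Nagata

section ValuationRing

/-- `W` is a valuation ring of the subfield `K` of `L`, in the sense of Mathlib's `ValuationSubring`
but inside the larger field `L`. -/
structure IsValuationRingOf (W : Subring L) (K : Subfield L) : Prop where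
  le : W ≤ K.toSubring
  mem_or_inv_mem : ∀ x ∈ K, x ∈ W ∨ x⁻¹ ∈ W

theorem isUnit_mk_iff {R : Subring L} {x : L} (hx : x ∈ R) :
    IsUnit (⟨x, hx⟩ : R) ↔ x ≠ 0 ∧ x⁻¹ ∈ R := by
  constructor
  · intro h
    obtain ⟨⟨y, hy⟩, hxy⟩ := h.exists_right_inv
    have hxy' : x * y = 1 := congrArg Subtype.val hxy
    exact ⟨left_ne_zero_of_mul_eq_one hxy', inv_eq_of_mul_eq_one_right hxy' ▸ hy⟩
  · rintro ⟨h0, hinv⟩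
    exact IsUnit.of_mul_eq_one ⟨x⁻¹, hinv⟩ (Subtype.ext (mul_inv_cancel₀ h0))

namespace IsValuationRingOf

variable {W : Subring L} {K : Subfield L}

theorem valuationRing (hW : IsValuationRingOf W K) : ValuationRing W := by
  refine ValuationRing.iff_dvd_total.mpr ⟨fun a b => ?_⟩
  rcases eq_or_ne (a : L) 0 with ha | ha
  · exact Or.inr ((Subtype.ext ha : a = 0) ▸ dvd_zero b)
  rcases eq_or_ne (b : L) 0 with hb | hb
  · exact Or.inl ((Subtype.ext hb : b = 0) ▸ dvd_zero a)
  rcases hW.mem_or_inv_mem _ (K.div_mem (hW.le b.2) (hW.le a.2)) with h | h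
  · exact Or.inl ⟨⟨_, h⟩, Subtype.ext (mul_div_cancel₀ _ ha).symm⟩
  · exact Or.inr ⟨⟨_, inv_div (b : L) a ▸ h⟩, Subtype.ext (mul_div_cancel₀ _ hb).symm⟩

theorem isLocalRing (hW : IsValuationRingOf W K) : IsLocalRing W :=
  have := hW.valuationRing
  inferInstance

theorem exists_coeff_div_mem (hW : IsValuationRingOf W K) {g : K[X]} (hg : g ≠ 0) :
    ∃ i, g.coeff i ≠ 0 ∧ ∀ j, (g.coeff j / g.coeff i : L) ∈ W := by
  let V : ValuationSubring K :=
    { W.comap K.subtype with mem_or_inv_mem' := fun x => hW.mem_or_inv_mem x x.2 }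
  obtain ⟨i, hi, hmax⟩ := Finset.exists_max_image g.support (fun i => V.valuation (g.coeff i))
    (support_nonempty.mpr hg)
  refine ⟨i, mem_support_iff.mp hi, fun j => ?_⟩
  by_cases hj : j ∈ g.support
  · have hle : V.valuation (g.coeff j / g.coeff i) ≤ 1 := by
      rw [map_div₀]
      exact div_le_one_of_le₀ (hmax j hj) zero_le
    exact (V.valuation_le_one_iff _).mp hle
  · rw [notMem_support_iff.mp hj, ZeroMemClass.coe_zero, zero_div]
    exact W.zero_mem

end IsValuationRingOf

theorem exists_map_eq_C_mul_map {K : Subfield L} {R : Subring L} {f : K[X]} {c : L}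
    (hc : c ≠ 0) (hf : ∀ j, (f.coeff j / c : L) ∈ R) :
    ∃ f' : R[X], f.map (algebraMap K L) = C c * f'.map (algebraMap R L) := by
  obtain ⟨f', hf'⟩ : C c⁻¹ * f.map (algebraMap K L) ∈ lifts (algebraMap R L) := by
    refine (lifts_iff_coeff_lifts _).mpr fun j => ⟨⟨_, hf j⟩, ?_⟩
    rw [coeff_C_mul, coeff_map]
    exact div_eq_inv_mul _ _
  refine ⟨f', ?_⟩
  rw [← coe_mapRingHom (algebraMap R L), hf', ← mul_assoc, ← C_mul, mul_inv_cancel₀ hc, C_1,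
    one_mul]

theorem aeval_eq_mul_aeval {K : Subfield L} {R : Subring L} {f : K[X]} {f' : R[X]} {c : L}
    (h : f.map (algebraMap K L) = C c * f'.map (algebraMap R L)) (T : L) :
    aeval T f = c * aeval T f' := by
  rw [← eval_map_algebraMap, h, eval_mul, eval_C, eval_map_algebraMap]

theorem coeff_eq_mul_coeff {K : Subfield L} {R : Subring L} {f : K[X]} {f' : R[X]} {c : L}
    (h : f.map (algebraMap K L) = C c * f'.map (algebraMap R L)) (j : ℕ) :
    (f.coeff j : L) = c * f'.coeff j := by
  have hj : (f.map (algebraMap K L)).coeff j = (C c * f'.map (algebraMap R L)).coeff j := by rw [h]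
  rwa [coeff_map, coeff_C_mul, coeff_map] at hj

namespace IsValuationRingOf

variable {W : Subring L} {K : Subfield L}

theorem exists_primitive (hW : IsValuationRingOf W K) {g : K[X]} (hg : g ≠ 0) :
    ∃ c ∈ K, c ≠ 0 ∧ ∃ g' : W[X], (∃ i, g'.coeff i = 1) ∧
      g.map (algebraMap K L) = C c * g'.map (algebraMap W L) := by
  obtain ⟨i, hi, hdiv⟩ := hW.exists_coeff_div_mem hg
  have hi0 : (g.coeff i : L) ≠ 0 := fun h => hi (Subtype.ext h)
  obtain ⟨g', hg'⟩ := exists_map_eq_C_mul_map hi0 hdiv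
  refine ⟨_, (g.coeff i).2, hi0, g', ⟨i, Subtype.ext (mul_left_cancel₀ hi0 ?_)⟩, hg'⟩
  rw [← coeff_eq_mul_coeff hg', OneMemClass.coe_one, mul_one]

theorem inf {E : Subfield L} (hW : IsValuationRingOf W E) (hKE : K ≤ E) :
    IsValuationRingOf (W ⊓ K.toSubring) K where
  le := inf_le_right
  mem_or_inv_mem x hx := (hW.mem_or_inv_mem x (hKE hx)).imp (⟨·, hx⟩) (⟨·, K.inv_mem hx⟩)

end IsValuationRingOf

end ValuationRing

section Kronecker

/-- The Kronecker function ring `Kr_{K(T)}(D, b)` of a subring `D` of the field `K`: the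
intersection of the Nagata rings `W(T)` of all valuation overrings `W` of `D` in `K`. -/
def kroneckerRing (D : Subring L) (K : Subfield L) (T : L) : Subring L :=
  ⨅ W : {W : Subring L // IsValuationRingOf W K ∧ D ≤ W}, nagataRing W.1 T

variable {D : Subring L} {K : Subfield L} {T : L}

theorem mem_kroneckerRing {x : L} : x ∈ kroneckerRing D K T ↔
    ∀ W : Subring L, IsValuationRingOf W K → D ≤ W → x ∈ nagataRing W T := by
  simp only [kroneckerRing, Subring.mem_iInf, Subtype.forall, and_imp]

theorem le_kroneckerRing : D ≤ kroneckerRing D K T := fun _ hx =>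
  mem_kroneckerRing.mpr fun _ _ hD => le_nagataRing (hD hx)

theorem self_mem_kroneckerRing : T ∈ kroneckerRing D K T :=
  mem_kroneckerRing.mpr fun _ _ _ => self_mem_nagataRing

theorem kroneckerRing_le (hD : D ≤ K.toSubring) :
    kroneckerRing D K T ≤ K⟮T⟯.toSubfield.toSubring := by
  intro x hx
  have hK : IsValuationRingOf K.toSubring K := ⟨le_rfl, fun _ hx => Or.inl hx⟩
  obtain ⟨f, g, -, -, rfl⟩ := mem_kroneckerRing.mp hx K.toSubring hK hD
  exact (mem_adjoin_simple_iff K _).mpr ⟨f, g, rfl⟩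

theorem aeval_div_aeval_mem_kroneckerRing {f g : K[X]} (hT : aeval T g ≠ 0)
    (hfg : ∀ i, f.coeff i = 0 ∨ ∃ j, f.coeff i = g.coeff j) :
    aeval T f / aeval T g ∈ kroneckerRing D K T := by
  refine mem_kroneckerRing.mpr fun W hW _ => ?_
  have hg : g ≠ 0 := fun h => hT (h ▸ map_zero _)
  obtain ⟨c, -, hc, g', ⟨i, hi⟩, hg'⟩ := hW.exists_primitive hg
  have hcoeff : ∀ j, (f.coeff j / c : L) ∈ W := by
    intro j
    rcases hfg j with h | ⟨k, h⟩
    · simp [h]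
    · rw [h, coeff_eq_mul_coeff hg', mul_div_cancel_left₀ _ hc]
      exact (g'.coeff k).2
  obtain ⟨f', hf'⟩ := exists_map_eq_C_mul_map hc hcoeff
  rw [aeval_eq_mul_aeval hg'] at hT ⊢
  rw [aeval_eq_mul_aeval hf', mul_div_mul_left _ _ hc]
  exact ⟨f', g', contentIdeal_eq_top_of_isUnit_coeff (hi ▸ isUnit_one),
    right_ne_zero_of_mul hT, rfl⟩

theorem inv_self_mem_kroneckerRing : T⁻¹ ∈ kroneckerRing D K T := by
  rcases eq_or_ne T 0 with rfl | hT
  · simp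
  have hcoeff : ∀ i, (1 : K[X]).coeff i = 0 ∨ ∃ j, (1 : K[X]).coeff i = (X : K[X]).coeff j := by
    intro i
    rcases eq_or_ne i 0 with rfl | hi
    · exact Or.inr ⟨1, by simp⟩
    · exact Or.inl (by simp [coeff_one, hi])
  simpa using aeval_div_aeval_mem_kroneckerRing (D := D) (T := T) (by simpa using hT) hcoeff

/-- Kronecker's trick: if `x = f(T) / g(T)` and `N > deg g`, then no coefficients are lost in
`h = X ^ N * f + g`, so that `f(T) / h(T)` and `g(T) / h(T)` lie in the Kronecker function ring. -/
theorem exists_mul_eq_and_pow_mul_add_eq_one (hT : Transcendental K T) {x : L} (hx : x ∈ K⟮T⟯) :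
    ∃ N ≠ 0, ∃ a ∈ kroneckerRing D K T, ∃ b ∈ kroneckerRing D K T,
      b ≠ 0 ∧ x * b = a ∧ T ^ N * a + b = 1 := by
  obtain ⟨f, g, hg, rfl⟩ : ∃ f g : K[X], aeval T g ≠ 0 ∧ x = aeval T f / aeval T g := by
    obtain ⟨f, g, rfl⟩ := (mem_adjoin_simple_iff K x).mp hx
    by_cases hg : aeval T g = 0
    · exact ⟨0, 1, by simp, by simp [hg]⟩
    · exact ⟨f, g, hg, rfl⟩
  set N := g.natDegree + 1
  set h : K[X] := X ^ N * f + g with h_def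
  have coeff_add (i : ℕ) : h.coeff (N + i) = f.coeff i := by
    rw [h_def, Polynomial.coeff_add, add_comm N i, coeff_X_pow_mul,
      coeff_eq_zero_of_natDegree_lt (p := g) (by omega), add_zero]
  have coeff_lt {i : ℕ} (hi : i < N) : h.coeff i = g.coeff i := by
    rw [h_def, Polynomial.coeff_add, coeff_X_pow_mul', if_neg (by omega), zero_add]
  have hh : aeval T h ≠ 0 := by
    have hne : h ≠ 0 := by
      intro h0
      refine hg ?_
      have : g.leadingCoeff = 0 := by
        rw [leadingCoeff, ← coeff_lt (Nat.lt_succ_self _), h0, coeff_zero]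
      rw [leadingCoeff_eq_zero.mp this, map_zero]
    exact fun h0 => hne ((transcendental_iff.mp hT) h h0)
  refine ⟨N, Nat.succ_ne_zero _, aeval T f / aeval T h,
    aeval_div_aeval_mem_kroneckerRing hh fun i => Or.inr ⟨N + i, (coeff_add i).symm⟩,
    aeval T g / aeval T h, aeval_div_aeval_mem_kroneckerRing hh fun i => ?_,
    div_ne_zero hg hh, ?_, ?_⟩
  · rcases lt_or_ge i N with hi | hi
    · exact Or.inr ⟨i, (coeff_lt hi).symm⟩
    · exact Or.inl (coeff_eq_zero_of_natDegree_lt hi)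
  · field_simp
  · have : aeval T h = T ^ N * aeval T f + aeval T g := by simp [h_def]
    rw [← mul_div_assoc, ← add_div, ← this, div_self hh]

theorem isValuationRingOf_of_kroneckerRing_le (hT : Transcendental K T) {B : Subring L}
    [IsLocalRing B] (hB : B ≤ K⟮T⟯.toSubfield.toSubring) (hKr : kroneckerRing D K T ≤ B) :
    IsValuationRingOf B K⟮T⟯.toSubfield where
  le := hB
  mem_or_inv_mem x hx := by
    obtain ⟨N, -, a, ha, b, hb, hb0, hxb, hab⟩ :=
      exists_mul_eq_and_pow_mul_add_eq_one (D := D) hT hx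
    have hsum : (⟨T, hKr self_mem_kroneckerRing⟩ ^ N * ⟨a, hKr ha⟩ + ⟨b, hKr hb⟩ : B) = 1 :=
      Subtype.ext hab
    rcases isUnit_or_isUnit_of_add_one hsum with h | h
    · right
      have hainv := ((isUnit_mk_iff _).mp (isUnit_of_mul_isUnit_right h)).2
      have hx : x⁻¹ = b * a⁻¹ := by rw [← hxb, mul_inv_rev, mul_inv_cancel_left₀ hb0]
      exact hx ▸ B.mul_mem (hKr hb) hainv
    · left
      have hx : x = a * b⁻¹ := by rw [← hxb, mul_inv_cancel_right₀ hb0]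
      exact hx ▸ B.mul_mem (hKr ha) ((isUnit_mk_iff _).mp h).2

theorem aeval_mem_of_mem {R B : Subring L} (hR : R ≤ B) (hT : T ∈ B) (f : R[X]) :
    aeval T f ∈ B := by
  rw [aeval_eq_sum_range]
  exact B.sum_mem fun i _ => B.mul_mem (hR (f.coeff i).2) (B.pow_mem hT i)

theorem inv_aeval_mem_of_kroneckerRing_le {W B : Subring L} (hWB : W ≤ B) (hWK : W ≤ K.toSubring)
    (hKr : kroneckerRing D K T ≤ B) {g : W[X]} {i : ℕ} (hi : IsUnit (g.coeff i)) :
    (aeval T g)⁻¹ ∈ B := by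
  rcases eq_or_ne (aeval T g) 0 with h0 | h0
  · simp [h0]
  set G : K[X] := g.map (Subring.inclusion hWK)
  have hG : aeval T G = aeval T g := by
    rw [aeval_def, eval₂_map]
    rfl
  have hquot : aeval T (C (G.coeff i)) / aeval T G ∈ kroneckerRing D K T := by
    refine aeval_div_aeval_mem_kroneckerRing (hG ▸ h0) fun j => ?_
    rcases eq_or_ne j 0 with rfl | hj
    · exact Or.inr ⟨i, coeff_C_zero⟩
    · exact Or.inl (coeff_C_of_ne_zero hj)
  have hC : aeval T (C (G.coeff i)) = (g.coeff i : L) := by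
    rw [aeval_C, coeff_map]
    rfl
  obtain ⟨hi0, hinv⟩ := (isUnit_mk_iff (g.coeff i).2).mp hi
  rw [hC, hG] at hquot
  have := B.mul_mem (hWB hinv) (hKr hquot)
  rwa [← mul_div_assoc, inv_mul_cancel₀ hi0, one_div] at this

theorem IsValuationRingOf.exists_eq_mul_aeval_div {W : Subring L} (hW : IsValuationRingOf W K)
    (hT : Transcendental K T) {x : L} (hx : x ∈ K⟮T⟯) (hx0 : x ≠ 0) :
    ∃ c ∈ K, ∃ f g : W[X], (∃ i, f.coeff i = 1) ∧ (∃ i, g.coeff i = 1) ∧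
      aeval T f ≠ 0 ∧ aeval T g ≠ 0 ∧ x = c * (aeval T f / aeval T g) := by
  obtain ⟨f, g, rfl⟩ := (mem_adjoin_simple_iff K x).mp hx
  have hf : f ≠ 0 := fun h => hx0 (by rw [h, map_zero, zero_div])
  have hg : g ≠ 0 := fun h => hx0 (by rw [h, map_zero, div_zero])
  obtain ⟨c, hcK, -, f', hi, hf'⟩ := hW.exists_primitive hf
  obtain ⟨d, hdK, -, g', hj, hg'⟩ := hW.exists_primitive hg
  refine ⟨c / d, K.div_mem hcK hdK, f', g', hi, hj, fun h0 => hf ?_, fun h0 => hg ?_, ?_⟩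
  · exact transcendental_iff.mp hT f (by rw [aeval_eq_mul_aeval hf', h0, mul_zero])
  · exact transcendental_iff.mp hT g (by rw [aeval_eq_mul_aeval hg', h0, mul_zero])
  · rw [aeval_eq_mul_aeval hf', aeval_eq_mul_aeval hg', mul_div_mul_comm]

theorem IsValuationRingOf.eq_nagataRing {B : Subring L} (hT : Transcendental K T)
    (hB : IsValuationRingOf B K⟮T⟯.toSubfield) (hKr : kroneckerRing D K T ≤ B) :
    B = nagataRing (B ⊓ K.toSubring) T := by
  have hW : IsValuationRingOf (B ⊓ K.toSubring) K := hB.inf fun x hx => K⟮T⟯.algebraMap_mem ⟨x, hx⟩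
  have hTB : T ∈ B := hKr self_mem_kroneckerRing
  refine le_antisymm (fun x hx => ?_) ?_
  · rcases eq_or_ne x 0 with rfl | hx0
    · exact zero_mem _
    obtain ⟨c, hcK, f, g, ⟨i, hi⟩, ⟨j, hj⟩, hf, hg, rfl⟩ :=
      hW.exists_eq_mul_aeval_div hT (hB.le hx) hx0
    have hc : c = c * (aeval T f / aeval T g) * aeval T g * (aeval T f)⁻¹ := by field_simp
    have hcB : c ∈ B := hc ▸ B.mul_mem (B.mul_mem hx (aeval_mem_of_mem inf_le_left hTB g))
      (inv_aeval_mem_of_kroneckerRing_le inf_le_left inf_le_right hKr (hi ▸ isUnit_one))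
    exact Subring.mul_mem _ (le_nagataRing ⟨hcB, hcK⟩)
      ⟨f, g, contentIdeal_eq_top_of_isUnit_coeff (hj ▸ isUnit_one), hg, rfl⟩
  · rintro _ ⟨f, g, hg, -, rfl⟩
    have := hW.isLocalRing
    obtain ⟨i, hi⟩ := exists_isUnit_coeff_of_contentIdeal_eq_top hg
    rw [div_eq_mul_inv]
    exact B.mul_mem (aeval_mem_of_mem inf_le_left hTB f)
      (inv_aeval_mem_of_kroneckerRing_le inf_le_left inf_le_right hKr hi)

end Kronecker

section LocalSubring

/-- The maximal ideal of a local subring of a field `L`, as a subset of `L`. -/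
def maximalIdealSet (A : LocalSubring L) : Set L :=
  Subtype.val '' (maximalIdeal A.toSubring : Set A.toSubring)

variable {A B : LocalSubring L} {x y : L}

theorem mk_mem_maximalIdeal_iff (hx : x ∈ A.toSubring) :
    (⟨x, hx⟩ : A.toSubring) ∈ maximalIdeal A.toSubring ↔ x ∈ maximalIdealSet A :=
  ⟨fun h => ⟨_, h, rfl⟩, by rintro ⟨_, h, rfl⟩; exact h⟩

theorem mem_of_mem_maximalIdealSet (hx : x ∈ maximalIdealSet A) : x ∈ A.toSubring := by
  obtain ⟨x, -, rfl⟩ := hx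
  exact x.2

theorem zero_mem_maximalIdealSet : (0 : L) ∈ maximalIdealSet A :=
  ⟨0, Ideal.zero_mem _, rfl⟩

theorem mul_mem_maximalIdealSet (hx : x ∈ A.toSubring) (hy : y ∈ maximalIdealSet A) :
    x * y ∈ maximalIdealSet A := by
  obtain ⟨y, hy, rfl⟩ := hy
  exact ⟨⟨x, hx⟩ * y, Ideal.mul_mem_left _ _ hy, rfl⟩

theorem add_mem_maximalIdealSet (hx : x ∈ maximalIdealSet A) (hy : y ∈ maximalIdealSet A) :
    x + y ∈ maximalIdealSet A := by
  obtain ⟨x, hx, rfl⟩ := hx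
  obtain ⟨y, hy, rfl⟩ := hy
  exact ⟨x + y, Ideal.add_mem _ hx hy, rfl⟩

theorem notMem_maximalIdealSet_iff (hx : x ∈ A.toSubring) :
    x ∉ maximalIdealSet A ↔ x ≠ 0 ∧ x⁻¹ ∈ A.toSubring := by
  rw [← isUnit_mk_iff hx, ← mk_mem_maximalIdeal_iff hx, mem_maximalIdeal, mem_nonunits_iff, not_not]

theorem one_notMem_maximalIdealSet : (1 : L) ∉ maximalIdealSet A :=
  (notMem_maximalIdealSet_iff (one_mem _)).mpr ⟨one_ne_zero, by simp⟩

theorem mem_maximalIdealSet_iff_of_le (h : A ≤ B) (hx : x ∈ A.toSubring) :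
    x ∈ maximalIdealSet A ↔ x ∈ maximalIdealSet B := by
  obtain ⟨hle, hloc⟩ := h
  rw [← mk_mem_maximalIdeal_iff hx, ← mk_mem_maximalIdeal_iff (hle hx), mem_maximalIdeal,
    mem_maximalIdeal, ← map_mem_nonunits_iff (Subring.inclusion hle)]
  rfl

theorem le_of_maximalIdealSet (hle : A.toSubring ≤ B.toSubring)
    (h : ∀ x ∈ maximalIdealSet A, x ∈ maximalIdealSet B) : A ≤ B :=
  ⟨hle, ⟨fun ⟨x, hx⟩ hu => by
    by_contra hn
    exact (mk_mem_maximalIdeal_iff (hle hx)).mpr (h x ((mk_mem_maximalIdeal_iff hx).mp hn)) hu⟩⟩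

theorem mem_ofPrime_iff {D : Subring L} {q : Ideal D} [q.IsPrime] :
    x ∈ (LocalSubring.ofPrime D q).toSubring ↔ ∃ a b : D, b ∉ q ∧ x = a / b := by
  constructor
  · intro hx
    obtain ⟨a, b, h⟩ := IsLocalization.exists_mk'_eq q.primeCompl
      (⟨x, hx⟩ : (LocalSubring.ofPrime D q).toSubring)
    have hb : (b : L) ≠ 0 := fun h0 => b.2 ((Subtype.ext h0 : (b : D) = 0) ▸ q.zero_mem)
    have := congrArg Subtype.val ((IsLocalization.eq_mk'_iff_mul_eq).mp h.symm)
    exact ⟨a, b, b.2, eq_div_of_mul_eq hb this⟩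
  · rintro ⟨a, b, hb, rfl⟩
    have hu := IsLocalization.map_units (LocalSubring.ofPrime D q).toSubring
      (⟨b, hb⟩ : q.primeCompl)
    rw [div_eq_mul_inv]
    exact Subring.mul_mem _ (LocalSubring.le_ofPrime D q a.2) ((isUnit_mk_iff _).mp hu).2

theorem mem_maximalIdealSet_ofPrime_iff {D : Subring L} {q : Ideal D} [q.IsPrime] (a : D) :
    (a : L) ∈ maximalIdealSet (LocalSubring.ofPrime D q) ↔ a ∈ q := by
  rw [← mk_mem_maximalIdeal_iff (LocalSubring.le_ofPrime D q a.2)]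
  exact IsLocalization.AtPrime.to_map_mem_maximal_iff (LocalSubring.ofPrime D q).toSubring q a

theorem ofPrime_comap_le {D E : Subring L} (h : D ≤ E) (q : Ideal E) [q.IsPrime] :
    LocalSubring.ofPrime D (q.comap (Subring.inclusion h)) ≤ LocalSubring.ofPrime E q := by
  have hle : ∀ x ∈ (LocalSubring.ofPrime D (q.comap (Subring.inclusion h))).toSubring,
      x ∈ (LocalSubring.ofPrime E q).toSubring := by
    intro x hx
    obtain ⟨a, b, hb, rfl⟩ := mem_ofPrime_iff.mp hx
    exact mem_ofPrime_iff.mpr ⟨Subring.inclusion h a, Subring.inclusion h b, hb, rfl⟩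
  refine le_of_maximalIdealSet hle fun x hx => ?_
  have hxD := mem_of_mem_maximalIdealSet hx
  obtain ⟨a, b, hb, rfl⟩ := mem_ofPrime_iff.mp hxD
  have hb0 : (b : L) ≠ 0 := fun h0 => hb ((Subtype.ext h0 : b = 0) ▸ Ideal.zero_mem _)
  have ha : a ∈ q.comap (Subring.inclusion h) := by
    rw [← mem_maximalIdealSet_ofPrime_iff, ← mul_div_cancel₀ (a : L) hb0]
    exact mul_mem_maximalIdealSet (LocalSubring.le_ofPrime D _ b.2) hx
  rw [div_eq_inv_mul]
  exact mul_mem_maximalIdealSet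
    (mem_ofPrime_iff.mpr ⟨1, Subring.inclusion h b, hb, by rw [OneMemClass.coe_one, one_div]; rfl⟩)
    ((mem_maximalIdealSet_ofPrime_iff (Subring.inclusion h a)).mpr ha)

theorem ofPrime_le_of_le_subfield {D : Subring L} {K : Subfield L} (hD : D ≤ K.toSubring)
    (q : Ideal D) [q.IsPrime] : (LocalSubring.ofPrime D q).toSubring ≤ K.toSubring := by
  intro x hx
  obtain ⟨a, b, -, rfl⟩ := mem_ofPrime_iff.mp hx
  exact K.div_mem (hD a.2) (hD b.2)

theorem IsValuationRingOf.inf_eq_of_le {K : Subfield L} (hA : IsValuationRingOf A.toSubring K)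
    (h : A ≤ B) : B.toSubring ⊓ K.toSubring = A.toSubring := by
  refine le_antisymm (fun x ⟨hxB, hxK⟩ => ?_) (le_inf h.1 hA.le)
  by_contra hxA
  have hinv := (hA.mem_or_inv_mem x hxK).resolve_left hxA
  have hmax : x⁻¹ ∈ maximalIdealSet A := by
    by_contra hn
    exact hxA (inv_inv x ▸ ((notMem_maximalIdealSet_iff hinv).mp hn).2)
  have hx0 : x ≠ 0 := fun h0 => hxA (h0 ▸ A.toSubring.zero_mem)
  exact (notMem_maximalIdealSet_iff (h.1 hinv)).mpr ⟨inv_ne_zero hx0, (inv_inv x).symm ▸ hxB⟩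
    ((mem_maximalIdealSet_iff_of_le h hinv).mp hmax)

end LocalSubring

section KroneckerStep

/-- The conditions on a local ring `A` with maximal ideal `M`, a field `K` and an element `T` under
which the ring `A ∩ Kr_{K(T)}(D, b)` behaves as one stage of the tower: `A` is contained in `K(T)`,
`T` is transcendental over `K`, `T⁻¹ ∈ M`, `T M² ⊆ A`, and powers of `T⁻¹` carry `K(T)` into `A`.
In the application, `K = Kₙ₋₁`, `T = X′ₙ` and `A = Aₙ`. -/
structure IsKroneckerStep (A : LocalSubring L) (K : Subfield L) (T : L) : Prop where
  le : A.toSubring ≤ K⟮T⟯.toSubfield.toSubring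
  transcendental : Transcendental K T
  inv_mem : T⁻¹ ∈ maximalIdealSet A
  sq_mul_mem : ∀ m ∈ maximalIdealSet A, m ^ 2 * T ∈ A.toSubring
  exists_pow_mul_mem : ∀ x ∈ K⟮T⟯, ∃ k, T⁻¹ ^ k * x ∈ A.toSubring

namespace IsKroneckerStep

variable {A : LocalSubring L} {K : Subfield L} {T : L} {D : Subring L}

theorem ne_zero (h : IsKroneckerStep A K T) : T ≠ 0 := fun h0 =>
  h.transcendental (h0 ▸ isAlgebraic_zero)

theorem inv_mem_inf (h : IsKroneckerStep A K T) : T⁻¹ ∈ A.toSubring ⊓ kroneckerRing D K T :=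
  ⟨mem_of_mem_maximalIdealSet h.inv_mem, inv_self_mem_kroneckerRing⟩

theorem kroneckerRing_le_of_mem (h : IsKroneckerStep A K T) (hD : D ≤ K.toSubring) {B : Subring L}
    (hB : A.toSubring ⊓ kroneckerRing D K T ≤ B) (hTB : T ∈ B) : kroneckerRing D K T ≤ B := by
  intro x hx
  obtain ⟨k, hk⟩ := h.exists_pow_mul_mem x (kroneckerRing_le hD hx)
  have hkB : T⁻¹ ^ k * x ∈ B :=
    hB ⟨hk, Subring.mul_mem _ (Subring.pow_mem _ inv_self_mem_kroneckerRing k) hx⟩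
  have hx_eq : x = T ^ k * (T⁻¹ ^ k * x) := by
    rw [← mul_assoc, ← mul_pow, mul_inv_cancel₀ h.ne_zero, one_pow, one_mul]
  exact hx_eq ▸ B.mul_mem (B.pow_mem hTB k) hkB

/-- Adding a high power of `T⁻¹` makes a unit of `A` invertible in `A ∩ Kr_{K(T)}(D, b)`. -/
theorem exists_inv_add_pow_mem (h : IsKroneckerStep A K T) {c : L} (hcA : c ∈ A.toSubring)
    (hc : c ∉ maximalIdealSet A) :
    ∃ j, c + T⁻¹ ^ (j + 1) ≠ 0 ∧ (c + T⁻¹ ^ (j + 1))⁻¹ ∈ A.toSubring ⊓ kroneckerRing D K T := by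
  obtain ⟨N, hN, a, -, b, hb, -, hab, hsum⟩ :=
    exists_mul_eq_and_pow_mul_add_eq_one (D := D) h.transcendental (h.le hcA)
  obtain ⟨j, rfl⟩ := Nat.exists_eq_add_one_of_ne_zero hN
  have hpow : T⁻¹ ^ (j + 1) ∈ maximalIdealSet A := by
    rw [pow_succ]
    exact mul_mem_maximalIdealSet (pow_mem (mem_of_mem_maximalIdealSet h.inv_mem) j) h.inv_mem
  have hu : c + T⁻¹ ^ (j + 1) ∉ maximalIdealSet A := by
    intro hu
    have := add_mem_maximalIdealSet hu
      (mul_mem_maximalIdealSet (A.toSubring.neg_mem A.toSubring.one_mem) hpow)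
    exact hc (by simpa using this)
  obtain ⟨hu0, huA⟩ := (notMem_maximalIdealSet_iff
    (A.toSubring.add_mem hcA (mem_of_mem_maximalIdealSet hpow))).mp hu
  refine ⟨j, hu0, huA, ?_⟩
  have hinv : (c + T⁻¹ ^ (j + 1))⁻¹ = T ^ (j + 1) * b := by
    refine inv_eq_of_mul_eq_one_right ?_
    rw [← hab] at hsum
    have hT : T⁻¹ ^ (j + 1) * T ^ (j + 1) = 1 := by
      rw [← mul_pow, inv_mul_cancel₀ h.ne_zero, one_pow]
    linear_combination hsum + b * hT
  rw [hinv]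
  exact Subring.mul_mem _ (Subring.pow_mem _ self_mem_kroneckerRing _) hb

theorem mem_ofPrime_or_eq_comap (h : IsKroneckerStep A K T)
    (q : Ideal ↥(A.toSubring ⊓ kroneckerRing D K T)) [hq : q.IsPrime] :
    T ∈ (LocalSubring.ofPrime _ q).toSubring ∨ q = (maximalIdeal A.toSubring).comap
      (Subring.inclusion (inf_le_left : A.toSubring ⊓ kroneckerRing D K T ≤ A.toSubring)) := by
  by_cases hTq : (⟨T⁻¹, h.inv_mem_inf⟩ : ↥(A.toSubring ⊓ kroneckerRing D K T)) ∈ q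
  · refine Or.inr (Ideal.ext fun d => Iff.trans ?_ (mk_mem_maximalIdeal_iff d.2.1).symm)
    refine ⟨fun hd => ?_, fun hd => ?_⟩
    · by_contra hdA
      obtain ⟨j, hu0, hu⟩ := h.exists_inv_add_pow_mem (D := D) d.2.1 hdA
      refine hq.ne_top ((Ideal.eq_top_iff_one q).mpr ?_)
      have := q.mul_mem_left ⟨_, hu⟩ (q.add_mem hd (q.pow_mem_of_mem hTq (j + 1) j.succ_pos))
      convert this
      exact Subtype.ext (inv_mul_cancel₀ hu0).symm
    · have hdT : (d : L) ^ 2 * T ∈ A.toSubring ⊓ kroneckerRing D K T :=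
        ⟨h.sq_mul_mem _ hd, Subring.mul_mem _ (Subring.pow_mem _ d.2.2 2) self_mem_kroneckerRing⟩
      have := q.mul_mem_left ⟨_, hdT⟩ hTq
      refine hq.mem_of_pow_mem 2 ?_
      convert this
      exact Subtype.ext (mul_inv_cancel_right₀ h.ne_zero _).symm
  · exact Or.inl (mem_ofPrime_iff.mpr ⟨1, _, hTq, by simp⟩)

theorem isValuationRingOf_of_mem (h : IsKroneckerStep A K T) (hD : D ≤ K.toSubring)
    {B : LocalSubring L} (hBK : B.toSubring ≤ K⟮T⟯.toSubfield.toSubring)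
    (hB : A.toSubring ⊓ kroneckerRing D K T ≤ B.toSubring) (hTB : T ∈ B.toSubring) :
    IsValuationRingOf B.toSubring K⟮T⟯.toSubfield :=
  isValuationRingOf_of_kroneckerRing_le h.transcendental hBK (h.kroneckerRing_le_of_mem hD hB hTB)

theorem ofPrime_eq_nagataRing (h : IsKroneckerStep A K T) (hDK : D ≤ K.toSubring)
    (hD : D ≤ A.toSubring ⊓ kroneckerRing D K T)
    (q : Ideal ↥(A.toSubring ⊓ kroneckerRing D K T)) [hq : q.IsPrime]
    (hTq : T ∈ (LocalSubring.ofPrime _ q).toSubring)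
    (hV : IsValuationRingOf
      (LocalSubring.ofPrime D (q.comap (Subring.inclusion hD))).toSubring K) :
    (LocalSubring.ofPrime _ q).toSubring =
      nagataRing (LocalSubring.ofPrime D (q.comap (Subring.inclusion hD))).toSubring T := by
  have hle := LocalSubring.le_ofPrime _ q
  rw [← hV.inf_eq_of_le (ofPrime_comap_le hD q)]
  exact IsValuationRingOf.eq_nagataRing h.transcendental
    (h.isValuationRingOf_of_mem hDK (ofPrime_le_of_le_subfield (inf_le_left.trans h.le) q) hle hTq)
    (h.kroneckerRing_le_of_mem hDK hle hTq)

theorem mem_of_notMem (h : IsKroneckerStep A K T) {W : Subring L}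
    (hW : IsValuationRingOf W K⟮T⟯.toSubfield) (hDW : A.toSubring ⊓ kroneckerRing D K T ≤ W)
    (hTW : T ∉ W) {c : L} (hcA : c ∈ A.toSubring) (hc : c ∉ maximalIdealSet A) : c ∈ W := by
  let B : LocalSubring L := { toSubring := W, isLocalRing := hW.isLocalRing }
  have mem_max {x : L} (hx : x ∈ K⟮T⟯) (hxW : x ∉ W) : x⁻¹ ∈ maximalIdealSet B := by
    by_contra hn
    have hinv := (hW.mem_or_inv_mem x hx).resolve_left hxW
    exact hxW (inv_inv x ▸ ((notMem_maximalIdealSet_iff (A := B) hinv).mp hn).2)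
  by_contra hcW
  obtain ⟨hc0, hcinv⟩ := (notMem_maximalIdealSet_iff hcA).mp hc
  have hcinv' : c⁻¹ ∉ maximalIdealSet A :=
    (notMem_maximalIdealSet_iff hcinv).mpr ⟨inv_ne_zero hc0, by rwa [inv_inv]⟩
  obtain ⟨j, hu0, hu⟩ := h.exists_inv_add_pow_mem (D := D) hcinv hcinv'
  have hT := mem_max (mem_adjoin_simple_self K T) hTW
  have hsum : c⁻¹ + T⁻¹ ^ (j + 1) ∈ maximalIdealSet B := by
    refine add_mem_maximalIdealSet (mem_max (h.le hcA) hcW) ?_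
    rw [pow_succ]
    exact mul_mem_maximalIdealSet (pow_mem (mem_of_mem_maximalIdealSet hT) j) hT
  exact (notMem_maximalIdealSet_iff (mem_of_mem_maximalIdealSet hsum)).mpr ⟨hu0, hDW hu⟩ hsum

end IsKroneckerStep

end KroneckerStep

section Bezout

theorem exists_eq_C_mul_of_isBezout {R : Type*} [CommRing R] [IsDomain R] [IsBezout R] (f : R[X]) :
    ∃ c f', f = C c * f' ∧ f'.contentIdeal = ⊤ := by
  rcases eq_or_ne f 0 with rfl | hf
  · exact ⟨0, 1, by rw [C_0, zero_mul], contentIdeal_one⟩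
  have hprin : f.contentIdeal.IsPrincipal := IsBezout.isPrincipal_of_FG _ f.contentIdeal_FG
  obtain ⟨f', hf'⟩ := hprin.contentIdeal_generator_dvd
  refine ⟨_, f', hf', (isPrimitive_iff_contentIdeal_eq_top f').mp fun d hd => ?_⟩
  have hc : hprin.generator ≠ 0 := fun h0 => hf (by rw [hf', h0, C_0, zero_mul])
  have hdvd : C (hprin.generator * d) ∣ f :=
    (C_mul (R := R) ▸ mul_dvd_mul_left _ hd).trans (dvd_of_eq hf'.symm)
  have hle := contentIdeal_le_contentIdeal_of_dvd hdvd
  rw [contentIdeal_C] at hle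
  have := Ideal.mem_span_singleton.mp (hle (Submodule.IsPrincipal.generator_mem _))
  exact isUnit_of_dvd_one ((mul_dvd_mul_iff_left hc).mp (by rwa [mul_one]))

variable {R : Subring L} {T : L}

theorem exists_associated_of_isBezout [IsBezout R] (x : nagataRing R T) :
    ∃ c : R, Associated x (Subring.inclusion le_nagataRing c) := by
  obtain ⟨f, g, hg, hg0, hx⟩ := mem_nagataRing.mp x.2
  obtain ⟨c, f', rfl, hf'⟩ := exists_eq_C_mul_of_isBezout f
  rcases eq_or_ne (aeval T f') 0 with h0 | h0
  · refine ⟨0, ?_⟩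
    rw [map_zero, associated_zero_iff_eq_zero]
    exact Subtype.ext (hx.trans (by rw [map_mul, h0, mul_zero, zero_div]; rfl))
  · have hu : aeval T f' / aeval T g ∈ nagataRing R T := ⟨f', g, hg, hg0, rfl⟩
    have hunit : IsUnit (⟨_, hu⟩ : nagataRing R T) :=
      (isUnit_mk_iff hu).mpr ⟨div_ne_zero h0 hg0, g, f', hf', h0, inv_div _ _⟩
    have hxu : x = Subring.inclusion le_nagataRing c * ⟨_, hu⟩ :=
      Subtype.ext (hx.trans (by rw [map_mul, aeval_C, mul_div_assoc]; rfl))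
    exact ⟨c, hxu ▸ associated_mul_unit_left _ _ hunit⟩

end Bezout

section Dimension

theorem ringKrullDim_le_of_forall_exists_associated {R S : Type*} [CommRing R] [CommRing S]
    (f : R →+* S) (hf : ∀ s, ∃ r, Associated s (f r)) : ringKrullDim S ≤ ringKrullDim R := by
  refine Order.krullDim_le_of_strictMono (PrimeSpectrum.comap f) fun P Q hPQ => ?_
  refine lt_of_le_not_ge (Ideal.comap_mono hPQ.le) fun hQP => hPQ.not_ge fun s hs => ?_
  obtain ⟨r, hr⟩ := hf s
  have hrQ : r ∈ Q.asIdeal.comap f := (Ideal.mem_iff_of_associated hr).mp hs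
  exact (Ideal.mem_iff_of_associated hr).mpr (hQP hrQ)

variable {k : Type*} [Field k] {A B : Type u} [CommRing A] [CommRing B] [Algebra k A] [Algebra k B]

theorem transcendental_adjoin_of_mem_ker [IsDomain A] {ι : Type*} (f : A →ₐ[k] B) {x : A}
    (hx0 : x ≠ 0) (hx : f x = 0) {z : ι → A} (hz : AlgebraicIndependent k (f ∘ z)) :
    Transcendental (Algebra.adjoin k (Set.range z)) x := by
  intro halg
  obtain ⟨p, hp0, hp⟩ :=
    halg.exists_nonzero_coeff_and_aeval_eq_zero (mem_nonZeroDivisors_of_ne_zero hx0)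
  have hrange : ∀ y ∈ Algebra.adjoin k (Set.range z),
      ∃ P : MvPolynomial ι k, MvPolynomial.aeval z P = y := by
    rw [Algebra.adjoin_range_eq_range_aeval]
    exact fun _ hy => hy
  obtain ⟨P, hP⟩ := hrange _ (p.coeff 0).2
  have hfP : f (MvPolynomial.aeval z P) = 0 := by
    rw [← divX_mul_X_add p, map_add, map_mul, aeval_X, aeval_C] at hp
    have := congrArg f hp
    rwa [map_add, map_mul, hx, mul_zero, zero_add, map_zero, Subalgebra.algebraMap_def,
      Algebra.algebraMap_self_apply, ← hP] at this
  have hP0 : P = 0 :=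
    (injective_iff_map_eq_zero _).mp hz P (by rw [← hfP, MvPolynomial.comp_aeval_apply]; rfl)
  exact hp0 (Subtype.ext (by rw [← hP, hP0, map_zero]; rfl))

theorem trdeg_add_one_le_of_surjective_of_not_injective [IsDomain A] [IsDomain B] (f : A →ₐ[k] B)
    (hf : Function.Surjective f) (hinj : ¬ Function.Injective f) :
    Algebra.trdeg k B + 1 ≤ Algebra.trdeg k A := by
  obtain ⟨x, hx, hx0⟩ : ∃ x, f x = 0 ∧ x ≠ 0 := by
    by_contra! h
    exact hinj ((injective_iff_map_eq_zero f).mpr h)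
  obtain ⟨ι, y, hy⟩ := exists_isTranscendenceBasis' k B
  choose z hz using fun i => hf (y i)
  have hfz : AlgebraicIndependent k (f ∘ z) := (funext hz : f ∘ z = y) ▸ hy.1
  have hind := ((AlgebraicIndependent.of_comp f hfz).option_iff_transcendental x).mpr
    (transcendental_adjoin_of_mem_ker f hx0 hx hfz)
  rw [← hy.cardinalMk_eq_trdeg, ← Cardinal.mk_option]
  exact hind.cardinalMk_le_trdeg

/-- Along a strict inclusion `P < Q` of primes, `trdeg (A ⧸ Q) < trdeg (A ⧸ P)`. -/
theorem ringKrullDim_le_of_trdeg_le {r : ℕ} (h : Algebra.trdeg k A ≤ r) : ringKrullDim A ≤ r := by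
  have hle (P : PrimeSpectrum A) : Algebra.trdeg k (A ⧸ P.asIdeal) ≤ r :=
    (trdeg_le_of_surjective (Ideal.Quotient.mkₐ k P.asIdeal) Ideal.Quotient.mk_surjective).trans h
  choose t htr ht using fun P => Cardinal.exists_nat_eq_of_le_nat (hle P)
  let codeg (P : PrimeSpectrum A) : (Fin (r + 1))ᵒᵈ :=
    OrderDual.toDual ⟨t P, Nat.lt_succ_of_le (htr P)⟩
  have hcodeg : StrictMono codeg := by
    intro P Q hPQ
    let f : A ⧸ P.asIdeal →ₐ[k] A ⧸ Q.asIdeal := Ideal.Quotient.factorₐ k hPQ.le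
    have hf : ¬ Function.Injective f := by
      intro hf
      refine hPQ.not_ge fun x hx => ?_
      rw [← Ideal.Quotient.eq_zero_iff_mem] at hx ⊢
      exact hf (by rw [map_zero, ← hx]; rfl)
    have := trdeg_add_one_le_of_surjective_of_not_injective f
      (Ideal.Quotient.factor_surjective hPQ.le) hf
    rw [ht P, ht Q] at this
    exact OrderDual.toDual_lt_toDual.mpr (Fin.mk_lt_mk.mpr (by exact_mod_cast this))
  refine iSup_le fun s => ?_
  have hlen := (s.map codeg hcodeg).length_lt_card
  rw [Fintype.card_orderDual, Fintype.card_fin, Nat.lt_succ_iff] at hlen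
  exact_mod_cast hlen

open scoped algebraAdjoinAdjoin in
theorem trdeg_adjoin_le {k E : Type*} [Field k] [Field E] [Algebra k E] (s : Set E) :
    Algebra.trdeg k (IntermediateField.adjoin k s) ≤ Cardinal.mk s := by
  have halg : Algebra.trdeg (Algebra.adjoin k s) (IntermediateField.adjoin k s) = 0 :=
    have : Algebra.IsAlgebraic (Algebra.adjoin k s) (IntermediateField.adjoin k s) :=
      IsLocalization.isAlgebraic _ (nonZeroDivisors (Algebra.adjoin k s))
    trdeg_eq_zero
  rw [← trdeg_add_eq k (Algebra.adjoin k s), halg, add_zero]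
  have hsurj := (MvPolynomial.aeval (R := k) (Subtype.val : s → E)).rangeRestrict_surjective
  have := lift_trdeg_le_of_surjective _ hsurj
  rw [MvPolynomial.trdeg_of_isDomain, Cardinal.lift_lift, Cardinal.lift_le] at this
  rwa [Algebra.adjoin_eq_range]

theorem ringKrullDim_le_of_le_adjoin {k : Subfield L} {W : Subring L} {s : Set L} {r : ℕ}
    (hs : Cardinal.mk s ≤ r) (hkW : k.toSubring ≤ W)
    (hW : W ≤ (IntermediateField.adjoin k s).toSubfield.toSubring) : ringKrullDim W ≤ r := by
  let W' : Subalgebra k L := { W with algebraMap_mem' := fun c => hkW c.2 }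
  let ι : W' →ₐ[k] IntermediateField.adjoin k s :=
    Subalgebra.inclusion (T := (IntermediateField.adjoin k s).toSubalgebra) hW
  exact ringKrullDim_le_of_trdeg_le (A := W') <|
    (trdeg_le_of_injective ι (Subalgebra.inclusion_injective hW)).trans <|
      (trdeg_adjoin_le s).trans hs

end Dimension

section NagataTower

theorem aeval_eq_eval₂_finSuccEquiv {R S : Type*} [CommRing R] [CommRing S] [Algebra R S] {n : ℕ}
    (s : Fin (n + 1) → S) (g : MvPolynomial (Fin (n + 1)) R) :
    MvPolynomial.aeval s g = (MvPolynomial.finSuccEquiv R n g).eval₂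
      (MvPolynomial.aeval fun i => s i.succ : MvPolynomial (Fin n) R →ₐ[R] S).toRingHom (s 0) := by
  induction g using MvPolynomial.induction_on with
  | C c => simp [MvPolynomial.finSuccEquiv_apply]
  | add p q hp hq => simp only [map_add, eval₂_add, hp, hq]
  | mul_X p i hp =>
    rw [map_mul, map_mul, eval₂_mul, hp]
    congr 1
    refine Fin.cases ?_ (fun i => ?_) i
    · simp [MvPolynomial.finSuccEquiv_X_zero]
    · simp [MvPolynomial.finSuccEquiv_X_succ]

theorem inv_mem_ofPrime {V : LocalSubring L} {R : Subring L} (hR : R ≤ V.toSubring) {x : L}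
    (hx : x ∈ (LocalSubring.ofPrime R
      ((maximalIdeal V.toSubring).comap (Subring.inclusion hR))).toSubring)
    (hxV : x ∉ maximalIdealSet V) :
    x⁻¹ ∈ (LocalSubring.ofPrime R
      ((maximalIdeal V.toSubring).comap (Subring.inclusion hR))).toSubring := by
  obtain ⟨a, b, hb, rfl⟩ := mem_ofPrime_iff.mp hx
  refine mem_ofPrime_iff.mpr ⟨b, a, fun ha => hxV ?_, inv_div _ _⟩
  have hbV : (b : L) ∉ maximalIdealSet V := mt (mk_mem_maximalIdeal_iff (hR b.2)).mpr hb
  rw [div_eq_inv_mul]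
  exact mul_mem_maximalIdealSet ((notMem_maximalIdealSet_iff (hR b.2)).mp hbV).2
    ((mk_mem_maximalIdeal_iff (hR a.2)).mp ha)

/-- The local ring `V` is the directed union of local rings `W₀, W₁, …` which it dominates and which
satisfy `Wₙ₊₁ = Wₙ(Tₙ)`, the Nagata ring of `Wₙ` in the element `Tₙ` transcendental over `Wₙ`. -/
structure IsNagataTower (W : ℕ → LocalSubring L) (T : ℕ → L) (V : LocalSubring L) : Prop where
  transcendental : ∀ n, Transcendental (W n).toSubring (T n)
  succ_eq : ∀ n, (W (n + 1)).toSubring = nagataRing (W n).toSubring (T n)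
  le : ∀ n, W n ≤ V
  exists_mem : ∀ x ∈ V.toSubring, ∃ n, x ∈ (W n).toSubring

namespace IsNagataTower

variable {W : ℕ → LocalSubring L} {T : ℕ → L} {V : LocalSubring L}

theorem le_succ (h : IsNagataTower W T V) (n : ℕ) : (W n).toSubring ≤ (W (n + 1)).toSubring :=
  h.succ_eq n ▸ le_nagataRing

theorem self_mem (h : IsNagataTower W T V) (n : ℕ) : T n ∈ (W (n + 1)).toSubring :=
  h.succ_eq n ▸ self_mem_nagataRing

theorem coe_eval₂ (h : IsNagataTower W T V) {n : ℕ} (g : (W n).toSubring[X]) :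
    (↑(g.eval₂ (Subring.inclusion (h.le_succ n)) ⟨T n, h.self_mem n⟩) : L) = aeval (T n) g :=
  hom_eval₂ g _ (W (n + 1)).toSubring.subtype _

theorem isUnit_eval₂ (h : IsNagataTower W T V) {n i : ℕ} {g : (W n).toSubring[X]}
    (hg : IsUnit (g.coeff i)) :
    IsUnit (g.eval₂ (Subring.inclusion (h.le_succ n)) ⟨T n, h.self_mem n⟩) := by
  have hg0 : aeval (T n) g ≠ 0 := fun h0 => by
    rw [transcendental_iff.mp (h.transcendental n) g h0, coeff_zero] at hg
    exact not_isUnit_zero hg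
  rw [← Subtype.coe_eta (g.eval₂ _ _) (Subtype.prop _), isUnit_mk_iff, h.coe_eval₂, h.succ_eq]
  exact ⟨hg0, 1, g, contentIdeal_eq_top_of_isUnit_coeff hg, hg0, by rw [map_one, one_div]⟩

/-- The variables are listed in reverse because `MvPolynomial.finSuccEquiv` splits off the variable
`0`, which has to be specialized to the last element `Tₙ`. -/
theorem exists_ringHom_eq_aeval (h : IsNagataTower W T V) (n : ℕ) :
    ∃ φ : MvPolynomial (Fin n) (W 0).toSubring →+* (W n).toSubring,
      (∀ g, (φ g : L) = MvPolynomial.aeval (fun i => T (Fin.rev i)) g) ∧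
      ∀ g m, IsUnit (MvPolynomial.coeff m g) → IsUnit (φ g) := by
  induction n with
  | zero =>
    refine ⟨MvPolynomial.constantCoeff, fun g => ?_, fun g m hg => ?_⟩
    · obtain ⟨c, rfl⟩ := MvPolynomial.C_surjective (Fin 0) g
      rw [MvPolynomial.aeval_C]
      exact congrArg Subtype.val (MvPolynomial.constantCoeff_C (Fin 0) c)
    · obtain ⟨c, rfl⟩ := MvPolynomial.C_surjective (Fin 0) g
      rw [Subsingleton.elim m 0, MvPolynomial.coeff_zero_C] at hg
      exact (MvPolynomial.constantCoeff_C (Fin 0) c).symm ▸ hg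
  | succ n ih =>
    obtain ⟨φ, hφ, hunit⟩ := ih
    let ψ : (W n).toSubring[X] →+* (W (n + 1)).toSubring :=
      eval₂RingHom (Subring.inclusion (h.le_succ n)) ⟨T n, h.self_mem n⟩
    refine ⟨ψ.comp ((mapRingHom φ).comp (MvPolynomial.finSuccEquiv (W 0).toSubring n)),
      fun g => ?_, fun g m hg => ?_⟩
    · rw [aeval_eq_eval₂_finSuccEquiv]
      refine (hom_eval₂ _ _ (W (n + 1)).toSubring.subtype _).trans ((eval₂_map _ _ _).trans ?_)
      congr 1
      refine RingHom.ext fun g => (hφ g).trans ?_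
      simp only [Fin.rev_succ, Fin.val_castSucc]
      rfl
    · rw [← m.cons_tail, ← MvPolynomial.finSuccEquiv_coeff_coeff] at hg
      have := hunit _ _ hg
      rw [← coeff_map] at this
      exact h.isUnit_eval₂ this

theorem aeval_notMem_maximalIdealSet (h : IsNagataTower W T V) {g : MvPolynomial ℕ (W 0).toSubring}
    {m : ℕ →₀ ℕ} (hm : IsUnit (MvPolynomial.coeff m g)) :
    MvPolynomial.aeval T g ∉ maximalIdealSet V := by
  let n := g.vars.sup id + 1
  let f : Fin n → ℕ := fun i => Fin.rev i
  have hf : Function.Injective f := Fin.val_injective.comp Fin.rev_injective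
  have hvars : (g.vars : Set ℕ) ⊆ Set.range f := fun i hi =>
    ⟨Fin.rev ⟨i, Nat.lt_succ_of_le (Finset.le_sup (f := id) hi)⟩, congrArg Fin.val (Fin.rev_rev _)⟩
  obtain ⟨g', hg'⟩ := MvPolynomial.exists_rename_eq_of_vars_subset_range g f hf hvars
  rw [← hg'] at hm ⊢
  obtain ⟨m, rfl, -⟩ := MvPolynomial.coeff_rename_ne_zero f g' m hm.ne_zero
  rw [MvPolynomial.coeff_rename_mapDomain f hf] at hm
  obtain ⟨φ, hφ, hunit⟩ := h.exists_ringHom_eq_aeval n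
  rw [MvPolynomial.aeval_rename]
  change MvPolynomial.aeval (fun i => T (Fin.rev i)) g' ∉ _
  rw [← hφ, ← mem_maximalIdealSet_iff_of_le (h.le n) (φ g').2,
    notMem_maximalIdealSet_iff (φ g').2, ← isUnit_mk_iff]
  exact hunit g' m hm

theorem aeval_mem (h : IsNagataTower W T V) (g : MvPolynomial ℕ (W 0).toSubring) :
    MvPolynomial.aeval T g ∈ V.toSubring := by
  rw [MvPolynomial.aeval_def, MvPolynomial.eval₂_eq]
  exact sum_mem fun m _ => mul_mem ((h.le 0).1 (MvPolynomial.coeff m g).2)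
    (prod_mem fun i _ => pow_mem ((h.le (i + 1)).1 (h.self_mem i)) _)

theorem exists_isUnit_coeff (h : IsNagataTower W T V) {g : MvPolynomial ℕ (W 0).toSubring}
    (hg : MvPolynomial.aeval T g ∉ maximalIdealSet V) : ∃ m, IsUnit (MvPolynomial.coeff m g) := by
  by_contra! hcoeff
  let ι := Subring.inclusion (h.le 0).1
  let t : ℕ → V.toSubring := fun i => ⟨T i, (h.le (i + 1)).1 (h.self_mem i)⟩
  refine hg ⟨g.eval₂ ι t, ?_, MvPolynomial.eval₂_comp_left V.toSubring.subtype ι t g⟩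
  rw [MvPolynomial.eval₂_eq]
  refine Ideal.sum_mem _ fun m _ => Ideal.mul_mem_right _ _ ?_
  exact ((h.le 0).2.1 _).mt (hcoeff m)

theorem aeval_notMem_of_isUnit_coeff (h : IsNagataTower W T V) {n i : ℕ} {g : (W n).toSubring[X]}
    (hg : IsUnit (g.coeff i)) : aeval (T n) g ∉ maximalIdealSet V := by
  have hmem := aeval_mem_of_mem (h.le_succ n) (h.self_mem n) g
  rw [← mem_maximalIdealSet_iff_of_le (h.le (n + 1)) hmem, notMem_maximalIdealSet_iff hmem]
  have := (isUnit_mk_iff (Subtype.prop _)).mp (h.isUnit_eval₂ hg)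
  rwa [h.coe_eval₂] at this

theorem range_aeval_le (h : IsNagataTower W T V) :
    (MvPolynomial.aeval (R := (W 0).toSubring) T).toRingHom.range ≤ V.toSubring := by
  rintro _ ⟨f, rfl⟩
  exact h.aeval_mem f

theorem le_ofPrime_range (h : IsNagataTower W T V) (n : ℕ) :
    (W n).toSubring ≤ (LocalSubring.ofPrime _
      ((maximalIdeal V.toSubring).comap (Subring.inclusion h.range_aeval_le))).toSubring := by
  have hle := LocalSubring.le_ofPrime _
    ((maximalIdeal V.toSubring).comap (Subring.inclusion h.range_aeval_le))
  induction n with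
  | zero => exact fun c hc => hle ⟨MvPolynomial.C ⟨c, hc⟩, MvPolynomial.aeval_C _ _⟩
  | succ n ih =>
    have hT := hle ⟨MvPolynomial.X n, MvPolynomial.aeval_X _ _⟩
    intro x hx
    rw [h.succ_eq] at hx
    obtain ⟨f, g, hg, -, rfl⟩ := mem_nagataRing.mp hx
    obtain ⟨i, hi⟩ := exists_isUnit_coeff_of_contentIdeal_eq_top hg
    rw [div_eq_mul_inv]
    exact mul_mem (aeval_mem_of_mem ih hT f) (inv_mem_ofPrime h.range_aeval_le
      (aeval_mem_of_mem ih hT g) (h.aeval_notMem_of_isUnit_coeff hi))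

theorem mem_iff (h : IsNagataTower W T V) {x : L} :
    x ∈ V.toSubring ↔ ∃ f g : MvPolynomial ℕ (W 0).toSubring,
      (∃ m, IsUnit (MvPolynomial.coeff m g)) ∧
      x = MvPolynomial.aeval T f / MvPolynomial.aeval T g := by
  constructor
  · intro hx
    obtain ⟨n, hn⟩ := h.exists_mem x hx
    obtain ⟨⟨_, f, rfl⟩, ⟨_, g, rfl⟩, hg, rfl⟩ := mem_ofPrime_iff.mp (h.le_ofPrime_range n hn)
    exact ⟨f, g, h.exists_isUnit_coeff (mt (mk_mem_maximalIdeal_iff (h.aeval_mem g)).mpr hg), rfl⟩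
  · rintro ⟨f, g, ⟨m, hm⟩, rfl⟩
    rw [div_eq_mul_inv]
    exact mul_mem (h.aeval_mem f)
      ((notMem_maximalIdealSet_iff (h.aeval_mem g)).mp (h.aeval_notMem_maximalIdealSet hm)).2

theorem exists_associated (h : IsNagataTower W T V) {K : ℕ → Subfield L}
    (hW : ∀ n, IsValuationRingOf (W n).toSubring (K n)) (v : V.toSubring) :
    ∃ c, Associated v (Subring.inclusion (h.le 0).1 c) := by
  obtain ⟨n, hn⟩ := h.exists_mem v v.2
  suffices ∀ n (w : (W n).toSubring), ∃ c,
      Associated (Subring.inclusion (h.le n).1 w) (Subring.inclusion (h.le 0).1 c) from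
    this n ⟨v, hn⟩
  intro n
  induction n with
  | zero => exact fun w => ⟨w, Associated.refl _⟩
  | succ n ih =>
    intro w
    have hle : nagataRing (W n).toSubring (T n) ≤ V.toSubring := h.succ_eq n ▸ (h.le (n + 1)).1
    have := (hW n).valuationRing
    obtain ⟨c, hc⟩ := exists_associated_of_isBezout
      (⟨w, h.succ_eq n ▸ w.2⟩ : nagataRing (W n).toSubring (T n))
    obtain ⟨c', hc'⟩ := ih c
    exact ⟨c', (hc.map (Subring.inclusion hle)).trans hc'⟩

theorem ringKrullDim_le (h : IsNagataTower W T V) {K : ℕ → Subfield L}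
    (hW : ∀ n, IsValuationRingOf (W n).toSubring (K n)) :
    ringKrullDim V.toSubring ≤ ringKrullDim (W 0).toSubring :=
  ringKrullDim_le_of_forall_exists_associated _ (h.exists_associated hW)

end IsNagataTower

end NagataTower

section KroneckerTower

/-- The data of the tower: local rings `A₀ ≤ A₁ ≤ ⋯`, each dominated by the next, and fields
`Kₙ₊₁ = Kₙ(Tₙ)` such that `Aₙ₊₁`, `Kₙ`, `Tₙ` form a Kronecker step. -/
structure IsKroneckerTower (A : ℕ → LocalSubring L) (K : ℕ → Subfield L) (T : ℕ → L) : Prop where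
  mono : Monotone A
  base_le : (A 0).toSubring ≤ (K 0).toSubring
  field_succ : ∀ n, K (n + 1) = (K n)⟮T n⟯.toSubfield
  step : ∀ n, IsKroneckerStep (A (n + 1)) (K n) (T n)

/-- The rings `D₀ = A₀` and `Dₙ₊₁ = Aₙ₊₁ ∩ Kr_{Kₙ(Tₙ)}(Dₙ, b)` of the tower. -/
def towerRing (A : ℕ → LocalSubring L) (K : ℕ → Subfield L) (T : ℕ → L) : ℕ → Subring L
  | 0 => (A 0).toSubring
  | n + 1 => (A (n + 1)).toSubring ⊓ kroneckerRing (towerRing A K T n) (K n) (T n)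

theorem transcendental_of_le_toSubring {R : Subring L} {K : Subfield L} {T : L}
    (h : R ≤ K.toSubring) (hT : Transcendental K T) : Transcendental R T := by
  rw [transcendental_iff] at hT ⊢
  intro p hp
  refine map_injective (Subring.inclusion h) (Set.inclusion_injective h) ?_
  rw [Polynomial.map_zero]
  exact hT _ ((eval₂_map _ _ _).trans hp)

variable {A : ℕ → LocalSubring L} {K : ℕ → Subfield L} {T : ℕ → L}

theorem towerRing_le_localSubring (n : ℕ) : towerRing A K T n ≤ (A n).toSubring := by
  cases n with
  | zero => exact le_rfl
  | succ n => exact inf_le_left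

/-- The union `D` of the rings `Dₙ`. -/
def towerLimit (A : ℕ → LocalSubring L) (K : ℕ → Subfield L) (T : ℕ → L) : Subring L :=
  ⨆ n, towerRing A K T n

/-- The ideal `𝓜ₙ` of `Dₙ`, the contraction of the maximal ideal of `Aₙ`. -/
def towerIdeal (A : ℕ → LocalSubring L) (K : ℕ → Subfield L) (T : ℕ → L) (n : ℕ) :
    Ideal (towerRing A K T n) :=
  (maximalIdeal (A n).toSubring).comap (Subring.inclusion (towerRing_le_localSubring n))

theorem towerRing_le_towerLimit (n : ℕ) : towerRing A K T n ≤ towerLimit A K T :=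
  le_iSup (towerRing A K T) n

/-- The contraction of an ideal of `D` to `Dₙ`. -/
abbrev towerContraction (q : Ideal (towerLimit A K T)) (n : ℕ) : Ideal (towerRing A K T n) :=
  q.comap (Subring.inclusion (towerRing_le_towerLimit n))

/-- The localization of `Dₙ` at the contraction of a prime ideal of `D`. -/
abbrev towerLocalization (q : Ideal (towerLimit A K T)) [q.IsPrime] (n : ℕ) : LocalSubring L :=
  LocalSubring.ofPrime (towerRing A K T n) (towerContraction q n)

theorem towerLocalization_le (q : Ideal (towerLimit A K T)) [q.IsPrime] (n : ℕ) :
    towerLocalization q n ≤ LocalSubring.ofPrime _ q :=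
  ofPrime_comap_le (towerRing_le_towerLimit n) q

namespace IsKroneckerTower

theorem towerRing_le_field (h : IsKroneckerTower A K T) (n : ℕ) :
    towerRing A K T n ≤ (K n).toSubring := by
  cases n with
  | zero => exact h.base_le
  | succ n =>
    rw [h.field_succ]
    exact inf_le_left.trans (h.step n).le

theorem towerRing_le_succ (h : IsKroneckerTower A K T) (n : ℕ) :
    towerRing A K T n ≤ towerRing A K T (n + 1) :=
  le_inf ((towerRing_le_localSubring n).trans (h.mono n.le_succ).1) le_kroneckerRing

theorem towerRing_mono (h : IsKroneckerTower A K T) : Monotone (towerRing A K T) :=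
  monotone_nat_of_le_succ h.towerRing_le_succ

theorem field_mono (h : IsKroneckerTower A K T) : Monotone K :=
  monotone_nat_of_le_succ fun n x hx => h.field_succ n ▸ (K n)⟮T n⟯.algebraMap_mem ⟨x, hx⟩

theorem ringKrullDim_le (h : IsKroneckerTower A K T) {F : ℕ → Subfield L} {s : Set L} {r : ℕ}
    (hFA : ∀ n, (F n).toSubring ≤ (A n).toSubring)
    (hKF : ∀ n, K n ≤ (IntermediateField.adjoin (F n) s).toSubfield) (hs : Cardinal.mk s ≤ r)
    (n : ℕ) {W : Subring L} (hW : IsValuationRingOf W (K n)) (hDW : towerRing A K T n ≤ W) :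
    ringKrullDim W ≤ r := by
  induction n generalizing W with
  | zero => exact ringKrullDim_le_of_le_adjoin hs ((hFA 0).trans hDW) (hW.le.trans (hKF 0))
  | succ n ih =>
    have hWle := hW.le.trans (hKF (n + 1))
    rw [h.field_succ] at hW
    by_cases hT : T n ∈ W
    · have hKrW := (h.step n).kroneckerRing_le_of_mem (h.towerRing_le_field n) hDW hT
      have hV : IsValuationRingOf (W ⊓ (K n).toSubring) (K n) :=
        hW.inf fun x hx => (K n)⟮T n⟯.algebraMap_mem ⟨x, hx⟩
      rw [hW.eq_nagataRing (h.step n).transcendental hKrW]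
      have := hV.valuationRing
      exact (ringKrullDim_le_of_forall_exists_associated _ exists_associated_of_isBezout).trans
        (ih hV (le_inf ((h.towerRing_le_succ n).trans hDW) (h.towerRing_le_field n)))
    · refine ringKrullDim_le_of_le_adjoin hs (fun x hx => ?_) hWle
      rcases eq_or_ne x 0 with rfl | hx0
      · exact W.zero_mem
      refine (h.step n).mem_of_notMem hW hDW hT (hFA _ hx) ?_
      exact (notMem_maximalIdealSet_iff (hFA _ hx)).mpr ⟨hx0, hFA _ ((F _).inv_mem hx)⟩

theorem mem_towerLimit (h : IsKroneckerTower A K T) {x : L} :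
    x ∈ towerLimit A K T ↔ ∃ n, x ∈ towerRing A K T n :=
  Subring.mem_iSup_of_directed h.towerRing_mono.directed_le

variable {q : Ideal (towerLimit A K T)} {n j : ℕ}

theorem contraction_eq_towerIdeal_of_le (h : IsKroneckerTower A K T) (hnj : n ≤ j)
    (hj : towerContraction q j = towerIdeal A K T j) :
    towerContraction q n = towerIdeal A K T n := by
  ext d
  have hd := SetLike.ext_iff.mp hj ⟨d, h.towerRing_mono hnj d.2⟩
  have hA := mem_maximalIdealSet_iff_of_le (h.mono hnj) (towerRing_le_localSubring n d.2)
  rw [← mk_mem_maximalIdeal_iff (towerRing_le_localSubring n d.2),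
    ← mk_mem_maximalIdeal_iff (towerRing_le_localSubring j (h.towerRing_mono hnj d.2))] at hA
  exact hd.trans hA.symm

variable [q.IsPrime]

theorem self_mem_localization (h : IsKroneckerTower A K T)
    (hq : towerContraction q (n + 1) ≠ towerIdeal A K T (n + 1)) (hnj : n ≤ j) :
    T j ∈ (towerLocalization q (j + 1)).toSubring :=
  ((h.step j).mem_ofPrime_or_eq_comap (towerContraction q (j + 1))
      (hq := Ideal.comap_isPrime _ q)).resolve_right fun hj =>
    hq (h.contraction_eq_towerIdeal_of_le (Nat.succ_le_succ hnj) hj)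

theorem isValuationRingOf_localization (h : IsKroneckerTower A K T)
    (hq : towerContraction q (n + 1) ≠ towerIdeal A K T (n + 1)) (hnj : n < j) :
    IsValuationRingOf (towerLocalization q j).toSubring (K j) := by
  obtain ⟨j, rfl⟩ := Nat.exists_eq_add_one_of_ne_zero (Nat.ne_zero_of_lt hnj)
  have hle := ofPrime_le_of_le_subfield (h.towerRing_le_field (j + 1)) (towerContraction q (j + 1))
  rw [h.field_succ] at hle ⊢
  exact (h.step j).isValuationRingOf_of_mem (B := towerLocalization q (j + 1))
    (h.towerRing_le_field j) hle (LocalSubring.le_ofPrime (towerRing A K T (j + 1)) _)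
    (h.self_mem_localization hq (Nat.le_of_lt_succ hnj))

theorem localization_succ (h : IsKroneckerTower A K T)
    (hq : towerContraction q (n + 1) ≠ towerIdeal A K T (n + 1)) (hnj : n < j) :
    (towerLocalization q (j + 1)).toSubring = nagataRing (towerLocalization q j).toSubring (T j) :=
  (h.step j).ofPrime_eq_nagataRing (h.towerRing_le_field j) (h.towerRing_le_succ j)
    (towerContraction q (j + 1)) (hq := Ideal.comap_isPrime _ q) (h.self_mem_localization hq hnj.le)
    (h.isValuationRingOf_localization hq hnj)

theorem isNagataTower (h : IsKroneckerTower A K T)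
    (hq : towerContraction q (n + 1) ≠ towerIdeal A K T (n + 1)) :
    IsNagataTower (fun i => towerLocalization q (n + 1 + i)) (fun i => T (n + 1 + i))
      (LocalSubring.ofPrime _ q) where
  transcendental i := transcendental_of_le_toSubring
    (h.isValuationRingOf_localization hq (by lia)).le (h.step _).transcendental
  succ_eq i := h.localization_succ hq (by lia)
  le i := towerLocalization_le q _
  exists_mem x hx := by
    obtain ⟨a, b, hb, rfl⟩ := mem_ofPrime_iff.mp hx
    obtain ⟨i, hi⟩ := h.mem_towerLimit.mp a.2
    obtain ⟨j, hj⟩ := h.mem_towerLimit.mp b.2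
    exact ⟨max i j, mem_ofPrime_iff.mpr ⟨⟨a, h.towerRing_mono (by lia) hi⟩,
      ⟨b, h.towerRing_mono (by lia) hj⟩, hb, rfl⟩⟩

theorem mem_or_inv_mem_ofPrime (h : IsKroneckerTower A K T)
    (hq : towerContraction q (n + 1) ≠ towerIdeal A K T (n + 1)) {m : ℕ} {x : L} (hx : x ∈ K m) :
    x ∈ (LocalSubring.ofPrime _ q).toSubring ∨ x⁻¹ ∈ (LocalSubring.ofPrime _ q).toSubring := by
  have hV := h.isValuationRingOf_localization hq (j := n + 1 + m) (by lia)
  have hle := (towerLocalization_le q (n + 1 + m)).1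
  exact (hV.mem_or_inv_mem x (h.field_mono (by lia) hx)).imp (fun h => hle h) fun h => hle h

theorem ringKrullDim_ofPrime_le (h : IsKroneckerTower A K T)
    (hq : towerContraction q (n + 1) ≠ towerIdeal A K T (n + 1)) {F : ℕ → Subfield L} {s : Set L}
    {r : ℕ} (hFA : ∀ n, (F n).toSubring ≤ (A n).toSubring)
    (hKF : ∀ n, K n ≤ (IntermediateField.adjoin (F n) s).toSubfield) (hs : Cardinal.mk s ≤ r) :
    ringKrullDim (LocalSubring.ofPrime _ q).toSubring ≤ r :=
  ((h.isNagataTower hq).ringKrullDim_le fun i =>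
    h.isValuationRingOf_localization hq (by lia)).trans
      (h.ringKrullDim_le hFA hKF hs _ (h.isValuationRingOf_localization hq (by lia))
        (LocalSubring.le_ofPrime _ _))

end IsKroneckerTower

end KroneckerTower

section FieldAddMaximalIdeal

variable {V V' : LocalSubring L} {k k' : Subfield L} {x y : L}

/-- The subring `k + M` of a local ring `V ⊇ k` with maximal ideal `M`. -/
def fieldAddMaximalSubring (V : LocalSubring L) (k : Subfield L)
    (hk : k.toSubring ≤ V.toSubring) : Subring L where
  carrier := {x | ∃ c ∈ k, ∃ m ∈ maximalIdealSet V, x = c + m}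
  zero_mem' := ⟨0, k.zero_mem, 0, zero_mem_maximalIdealSet, (add_zero 0).symm⟩
  one_mem' := ⟨1, k.one_mem, 0, zero_mem_maximalIdealSet, (add_zero 1).symm⟩
  add_mem' := by
    rintro _ _ ⟨c, hc, m, hm, rfl⟩ ⟨d, hd, n, hn, rfl⟩
    exact ⟨c + d, k.add_mem hc hd, m + n, add_mem_maximalIdealSet hm hn, add_add_add_comm _ _ _ _⟩
  mul_mem' := by
    rintro _ _ ⟨c, hc, m, hm, rfl⟩ ⟨d, hd, n, hn, rfl⟩
    refine ⟨c * d, k.mul_mem hc hd, c * n + (d + n) * m, add_mem_maximalIdealSet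
      (mul_mem_maximalIdealSet (hk hc) hn) (mul_mem_maximalIdealSet
        (add_mem (hk hd) (mem_of_mem_maximalIdealSet hn)) hm), by ring⟩
  neg_mem' := by
    rintro _ ⟨c, hc, m, hm, rfl⟩
    refine ⟨-c, k.neg_mem hc, -1 * m, mul_mem_maximalIdealSet (by simp) hm, by ring⟩

variable (hk : k.toSubring ≤ V.toSubring) (hk' : k'.toSubring ≤ V'.toSubring)

theorem fieldAddMaximalSubring_le : fieldAddMaximalSubring V k hk ≤ V.toSubring := by
  rintro _ ⟨c, hc, m, hm, rfl⟩
  exact add_mem (hk hc) (mem_of_mem_maximalIdealSet hm)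

theorem mem_fieldAddMaximalSubring_of_mem_maximalIdealSet (hx : x ∈ maximalIdealSet V) :
    x ∈ fieldAddMaximalSubring V k hk :=
  ⟨0, k.zero_mem, x, hx, (zero_add x).symm⟩

theorem isUnit_fieldAddMaximalSubring {x : fieldAddMaximalSubring V k hk}
    (hx : (x : L) ∉ maximalIdealSet V) : IsUnit x := by
  obtain ⟨hx0, hinv⟩ := (notMem_maximalIdealSet_iff (fieldAddMaximalSubring_le hk x.2)).mp hx
  refine (isUnit_mk_iff x.2).mpr ⟨hx0, ?_⟩
  obtain ⟨c, hc, m, hm, hcm⟩ := x.2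
  have hc0 : c ≠ 0 := by
    rintro rfl
    exact hx (hcm ▸ (zero_add m).symm ▸ hm)
  refine ⟨c⁻¹, k.inv_mem hc, -((x : L)⁻¹ * c⁻¹) * m,
    mul_mem_maximalIdealSet (neg_mem (mul_mem hinv (hk (k.inv_mem hc)))) hm, ?_⟩
  rw [eq_sub_of_add_eq' hcm.symm]
  field_simp
  ring

/-- The subring `k + M` of a local ring `V ⊇ k` with maximal ideal `M`, as a local ring. -/
def fieldAddMaximalIdeal (V : LocalSubring L) (k : Subfield L) (hk : k.toSubring ≤ V.toSubring) :
    LocalSubring L where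
  toSubring := fieldAddMaximalSubring V k hk
  isLocalRing := by
    refine IsLocalRing.of_isUnit_or_isUnit_one_sub_self fun x => ?_
    by_cases hx : (x : L) ∈ maximalIdealSet V
    · refine Or.inr (isUnit_fieldAddMaximalSubring hk fun h =>
        one_notMem_maximalIdealSet (A := V) ?_)
      exact add_sub_cancel (x : L) 1 ▸ add_mem_maximalIdealSet hx h
    · exact Or.inl (isUnit_fieldAddMaximalSubring hk hx)

theorem fieldAddMaximalIdeal_le : fieldAddMaximalIdeal V k hk ≤ V :=
  ⟨fieldAddMaximalSubring_le hk, ⟨fun x hx => isUnit_fieldAddMaximalSubring hk fun h =>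
    (mk_mem_maximalIdeal_iff (fieldAddMaximalSubring_le hk x.2)).mpr h hx⟩⟩

theorem maximalIdealSet_fieldAddMaximalIdeal :
    maximalIdealSet (fieldAddMaximalIdeal V k hk) = maximalIdealSet V := by
  ext x
  refine ⟨fun hx => ?_, fun hx => ?_⟩
  · exact (mem_maximalIdealSet_iff_of_le (fieldAddMaximalIdeal_le hk)
      (mem_of_mem_maximalIdealSet hx)).mp hx
  · exact (mem_maximalIdealSet_iff_of_le (fieldAddMaximalIdeal_le hk)
      (mem_fieldAddMaximalSubring_of_mem_maximalIdealSet hk hx)).mpr hx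

theorem fieldAddMaximalIdeal_mono (hkk' : k ≤ k') (hV : V ≤ V') :
    fieldAddMaximalIdeal V k hk ≤ fieldAddMaximalIdeal V' k' hk' := by
  have hmax : ∀ x ∈ maximalIdealSet V, x ∈ maximalIdealSet V' := fun x hx =>
    (mem_maximalIdealSet_iff_of_le hV (mem_of_mem_maximalIdealSet hx)).mp hx
  refine le_of_maximalIdealSet ?_ (by simpa only [maximalIdealSet_fieldAddMaximalIdeal] using hmax)
  rintro _ ⟨c, hc, m, hm, rfl⟩
  exact ⟨c, hkk' hc, m, hmax m hm, rfl⟩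

theorem le_fieldAddMaximalIdeal : k.toSubring ≤ (fieldAddMaximalIdeal V k hk).toSubring :=
  fun c hc => ⟨c, hc, 0, zero_mem_maximalIdealSet, (add_zero c).symm⟩

/-- If `M = yV` and `X ∈ V`, then `T = 1 / y + X` is `y⁻¹` up to a unit of `V`. -/
theorem isKroneckerStep_fieldAddMaximalIdeal {K : Subfield L} {T X : L} (hy0 : y ≠ 0)
    (hy : ∀ x, x ∈ maximalIdealSet V ↔ ∃ v ∈ V.toSubring, x = y * v)
    (hX : X ∈ V.toSubring) (hT : T = (1 + y * X) / y) (htr : Transcendental K T)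
    (hV : V.toSubring ≤ K⟮T⟯.toSubfield.toSubring)
    (hpow : ∀ x ∈ K⟮T⟯, ∃ n, y ^ n * x ∈ V.toSubring) :
    IsKroneckerStep (fieldAddMaximalIdeal V k hk) K T := by
  have hyX : y * X ∈ maximalIdealSet V := (hy _).mpr ⟨X, hX, rfl⟩
  have hu : 1 + y * X ∉ maximalIdealSet V := fun h => one_notMem_maximalIdealSet (A := V) (by
    simpa using add_mem_maximalIdealSet h (mul_mem_maximalIdealSet (neg_mem (one_mem _)) hyX))
  obtain ⟨-, hinv⟩ := (notMem_maximalIdealSet_iff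
    (add_mem (one_mem _) (mem_of_mem_maximalIdealSet hyX))).mp hu
  have hTinv : T⁻¹ = y * (1 + y * X)⁻¹ := by rw [hT, inv_div, div_eq_mul_inv]
  have hTmem : T⁻¹ ∈ maximalIdealSet V := (hy _).mpr ⟨_, hinv, hTinv⟩
  refine ⟨(fieldAddMaximalSubring_le hk).trans hV, htr, ?_, fun m hm => ?_, fun x hx => ?_⟩
  · rwa [maximalIdealSet_fieldAddMaximalIdeal]
  · rw [maximalIdealSet_fieldAddMaximalIdeal] at hm
    obtain ⟨v, hv, rfl⟩ := (hy _).mp hm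
    refine mem_fieldAddMaximalSubring_of_mem_maximalIdealSet hk ((hy _).mpr ⟨v ^ 2 * (1 + y * X),
      mul_mem (pow_mem hv 2) (add_mem (one_mem _) (mem_of_mem_maximalIdealSet hyX)), ?_⟩)
    rw [hT]
    field_simp
  · obtain ⟨n, hn⟩ := hpow x hx
    refine ⟨n + 1, mem_fieldAddMaximalSubring_of_mem_maximalIdealSet hk ?_⟩
    have : T⁻¹ ^ (n + 1) * x = (1 + y * X)⁻¹ ^ n * (y ^ n * x) * T⁻¹ := by
      rw [pow_succ, hTinv, mul_pow]
      ring
    exact this ▸ mul_mem_maximalIdealSet (mul_mem (pow_mem hinv n) hn) hTmem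

end FieldAddMaximalIdeal

section AdicRing

/-- The polynomial ring `F[y]` inside the field `L`. -/
abbrev polynomialSubring (F : Subfield L) (y : L) : Subring L :=
  Subring.closure ((F : Set L) ∪ {y})

variable {F F' : Subfield L} {x y : L}

theorem adjoin_toSubring_eq_polynomialSubring :
    (Algebra.adjoin F {y}).toSubring = polynomialSubring F y := by
  rw [Algebra.adjoin_eq_ring_closure]
  exact congrArg (fun s => Subring.closure (s ∪ {y})) Subtype.range_coe

theorem mem_polynomialSubring_of_mem (hx : x ∈ F) : x ∈ polynomialSubring F y :=
  Subring.subset_closure (Or.inl hx)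

theorem self_mem_polynomialSubring : y ∈ polynomialSubring F y :=
  Subring.subset_closure (Or.inr rfl)

/-- The isomorphism of `F[X]` with `F[y]` for `y` transcendental over `F`. -/
def polynomialEquivPolynomialSubring (hy : Transcendental F y) : F[X] ≃+* polynomialSubring F y :=
  (algEquivOfTranscendental F y hy).toRingEquiv.trans
    (RingEquiv.subringCongr adjoin_toSubring_eq_polynomialSubring)

theorem coe_polynomialEquivPolynomialSubring (hy : Transcendental F y) (p : F[X]) :
    (polynomialEquivPolynomialSubring hy p : L) = aeval y p := by
  change ((algEquivOfTranscendental F y hy p : Algebra.adjoin F {y}) : L) = aeval y p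
  rw [algEquivOfTranscendental_apply]
  exact (aeval_algHom_apply (Algebra.adjoin F {y}).val _ p).symm

theorem exists_eq_add_mul_of_mem_polynomialSubring (hy : Transcendental F y)
    (hx : x ∈ polynomialSubring F y) :
    ∃ c ∈ F, ∃ h ∈ polynomialSubring F y, x = c + y * h := by
  obtain ⟨p, hp⟩ := (polynomialEquivPolynomialSubring hy).surjective ⟨x, hx⟩
  refine ⟨p.coeff 0, (p.coeff 0).2, _, (polynomialEquivPolynomialSubring hy p.divX).2, ?_⟩
  calc x = aeval y p := by rw [← coe_polynomialEquivPolynomialSubring hy, hp]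
    _ = aeval y (p.divX * X + C (p.coeff 0)) := by rw [divX_mul_X_add]
    _ = aeval y p.divX * y + p.coeff 0 := by rw [map_add, map_mul, aeval_X, aeval_C]; rfl
    _ = p.coeff 0 + y * polynomialEquivPolynomialSubring hy p.divX := by
      rw [coe_polynomialEquivPolynomialSubring, add_comm, mul_comm]

/-- The prime `y` of the ring `F[y]`. -/
abbrev polynomialSubringVar (F : Subfield L) (y : L) : polynomialSubring F y :=
  ⟨y, self_mem_polynomialSubring⟩

theorem prime_polynomialSubringVar (hy : Transcendental F y) :
    Prime (polynomialSubringVar F y) := by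
  have hX : polynomialEquivPolynomialSubring hy X = polynomialSubringVar F y :=
    Subtype.ext ((coe_polynomialEquivPolynomialSubring hy X).trans (aeval_X y))
  exact hX ▸ (MulEquiv.prime_iff (polynomialEquivPolynomialSubring hy)).mpr prime_X

theorem isPrime_span_polynomialSubringVar (hy : Transcendental F y) :
    (Ideal.span {polynomialSubringVar F y}).IsPrime :=
  (Ideal.span_singleton_prime (prime_polynomialSubringVar hy).ne_zero).mpr
    (prime_polynomialSubringVar hy)

/-- The local ring `F[y]_{(y)}` inside the field `L`. -/
def adicRing (hy : Transcendental F y) : LocalSubring L :=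
  have := isPrime_span_polynomialSubringVar hy
  LocalSubring.ofPrime (polynomialSubring F y) (Ideal.span {polynomialSubringVar F y})

theorem mem_span_polynomialSubringVar {a : polynomialSubring F y} :
    a ∈ Ideal.span {polynomialSubringVar F y} ↔ ∃ h ∈ polynomialSubring F y, (a : L) = y * h :=
  Ideal.mem_span_singleton.trans
    ⟨fun ⟨h, ha⟩ => ⟨h, h.2, congrArg Subtype.val ha⟩, fun ⟨h, hh, ha⟩ => ⟨⟨h, hh⟩, Subtype.ext ha⟩⟩

theorem mem_adicRing (hy : Transcendental F y) : x ∈ (adicRing hy).toSubring ↔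
    ∃ a ∈ polynomialSubring F y, ∃ b ∈ polynomialSubring F y,
      (¬∃ h ∈ polynomialSubring F y, b = y * h) ∧ x = a / b := by
  have := isPrime_span_polynomialSubringVar hy
  refine mem_ofPrime_iff.trans ⟨?_, ?_⟩
  · rintro ⟨a, b, hb, rfl⟩
    exact ⟨a, a.2, b, b.2, mt mem_span_polynomialSubringVar.mpr hb, rfl⟩
  · rintro ⟨a, ha, b, hb, hyb, rfl⟩
    exact ⟨⟨a, ha⟩, ⟨b, hb⟩, mt mem_span_polynomialSubringVar.mp hyb, rfl⟩

theorem polynomialSubring_le_adicRing (hy : Transcendental F y) :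
    polynomialSubring F y ≤ (adicRing hy).toSubring :=
  have := isPrime_span_polynomialSubringVar hy
  LocalSubring.le_ofPrime _ _

theorem adicRing_le (hy : Transcendental F y) :
    (adicRing hy).toSubring ≤ (Subfield.closure ((F : Set L) ∪ {y})).toSubring := by
  have := isPrime_span_polynomialSubringVar hy
  exact ofPrime_le_of_le_subfield (Subfield.subring_closure_le _) _

theorem mem_maximalIdealSet_adicRing (hy : Transcendental F y) :
    x ∈ maximalIdealSet (adicRing hy) ↔ ∃ v ∈ (adicRing hy).toSubring, x = y * v := by
  have := isPrime_span_polynomialSubringVar hy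
  constructor
  · intro hx
    obtain ⟨a, b, hb, rfl⟩ := mem_ofPrime_iff.mp (mem_of_mem_maximalIdealSet hx)
    have hb0 : (b : L) ≠ 0 := fun h0 => hb ((Subtype.ext h0 : b = 0) ▸ Ideal.zero_mem _)
    have ha : a ∈ Ideal.span {polynomialSubringVar F y} := by
      rw [← mem_maximalIdealSet_ofPrime_iff, ← mul_div_cancel₀ (a : L) hb0]
      exact mul_mem_maximalIdealSet (polynomialSubring_le_adicRing hy b.2) hx
    obtain ⟨h, hh, ha⟩ := mem_span_polynomialSubringVar.mp ha
    exact ⟨h / b, mem_ofPrime_iff.mpr ⟨⟨h, hh⟩, b, hb, rfl⟩, by rw [ha, mul_div_assoc]⟩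
  · rintro ⟨v, hv, rfl⟩
    rw [mul_comm]
    exact mul_mem_maximalIdealSet hv ((mem_maximalIdealSet_ofPrime_iff _).mpr
      (Ideal.mem_span_singleton_self (polynomialSubringVar F y)))

theorem polynomialSubring_mono (h : F ≤ F') : polynomialSubring F y ≤ polynomialSubring F' y :=
  Subring.closure_mono (Set.union_subset_union_left _ h)

theorem adicRing_mono (hy : Transcendental F y) (hy' : Transcendental F' y) (h : F ≤ F') :
    adicRing hy ≤ adicRing hy' := by
  have hP := polynomialSubring_mono (y := y) h
  have hle : (adicRing hy).toSubring ≤ (adicRing hy').toSubring := by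
    intro x hx
    obtain ⟨a, ha, b, hb, hyb, rfl⟩ := (mem_adicRing hy).mp hx
    refine (mem_adicRing hy').mpr ⟨a, hP ha, b, hP hb, fun hyb' => ?_, rfl⟩
    obtain ⟨c, hc, g, hg, rfl⟩ := exists_eq_add_mul_of_mem_polynomialSubring hy hb
    have hc0 : c ≠ 0 := by
      rintro rfl
      exact hyb ⟨g, hg, zero_add _⟩
    obtain ⟨g', hg', hgg'⟩ := hyb'
    have hdvd : polynomialSubringVar F' y ∣ ⟨c, hP (mem_polynomialSubring_of_mem hc)⟩ :=
      ⟨⟨g', hg'⟩ - ⟨g, hP hg⟩, Subtype.ext <|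
        (eq_sub_of_add_eq hgg').trans (mul_sub y g' g).symm⟩
    refine (prime_polynomialSubringVar hy').not_isUnit (isUnit_of_dvd_unit hdvd ?_)
    exact (isUnit_mk_iff _).mpr ⟨hc0, mem_polynomialSubring_of_mem (F'.inv_mem (h hc))⟩
  refine le_of_maximalIdealSet hle fun x hx => ?_
  obtain ⟨v, hv, rfl⟩ := (mem_maximalIdealSet_adicRing hy).mp hx
  exact (mem_maximalIdealSet_adicRing hy').mpr ⟨v, hle hv, rfl⟩

theorem exists_pow_mul_mem_adicRing (hy : Transcendental F y)
    (hx : x ∈ Subfield.closure ((F : Set L) ∪ {y})) :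
    ∃ n, y ^ n * x ∈ (adicRing hy).toSubring := by
  obtain ⟨a, ha, b, hb, rfl⟩ := Subfield.mem_closure_iff.mp hx
  rcases eq_or_ne b 0 with rfl | hb0
  · exact ⟨0, by simp⟩
  have := isNoetherianRing_of_ringEquiv _ (polynomialEquivPolynomialSubring hy)
  have hprime := prime_polynomialSubringVar hy
  obtain ⟨n, b', hb', hbb'⟩ := WfDvdMonoid.max_power_factor
    (a₀ := (⟨b, hb⟩ : polynomialSubring F y)) (fun h => hb0 (congrArg Subtype.val h))
    hprime.irreducible
  have hy0 : y ≠ 0 := fun h => hprime.ne_zero (Subtype.ext h)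
  refine ⟨n, (mem_adicRing hy).mpr ⟨a, ha, b', b'.2, fun h => hb' ?_, ?_⟩⟩
  · exact Ideal.mem_span_singleton.mp (mem_span_polynomialSubringVar.mpr h)
  · have hb_eq : b = y ^ n * b' := congrArg Subtype.val hbb'
    rw [hb_eq, ← mul_div_assoc, mul_div_mul_left _ _ (pow_ne_zero n hy0)]

end AdicRing

section Ambient

variable (k0 : Type) [Field k0] (r : ℕ)

/-- The family of all indeterminates of the ambient field. -/
def ambVar (i : TowerVars r) : Amb k0 r :=
  algebraMap (MvPolynomial (TowerVars r) k0) (Amb k0 r) (MvPolynomial.X i)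

theorem algebraicIndependent_ambVar : AlgebraicIndependent k0 (ambVar k0 r) :=
  (MvPolynomial.algebraicIndependent_X (TowerVars r) k0).map'
    (f := IsScalarTower.toAlgHom k0 (MvPolynomial (TowerVars r) k0) (Amb k0 r))
    (IsFractionRing.injective (MvPolynomial (TowerVars r) k0) (Amb k0 r))

/-- The subfield of the ambient field generated by all indeterminates except `i`. -/
def ambFieldWithout (i : TowerVars r) : IntermediateField k0 (Amb k0 r) :=
  IntermediateField.adjoin k0 (ambVar k0 r '' {i}ᶜ)

variable {k0 r}

theorem ambVar_mem_ambFieldWithout {i j : TowerVars r} (h : j ≠ i) :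
    ambVar k0 r j ∈ ambFieldWithout k0 r i :=
  IntermediateField.subset_adjoin _ _ ⟨j, h, rfl⟩

theorem transcendental_ambVar (i : TowerVars r) :
    Transcendental (ambFieldWithout k0 r i) (ambVar k0 r i) := by
  rw [ambFieldWithout, IntermediateField.transcendental_adjoin_iff]
  exact (algebraicIndependent_ambVar k0 r).transcendental_adjoin (by simp)

theorem baseSet_subset (E : IntermediateField k0 (Amb k0 r)) : baseSet k0 r ⊆ E := by
  rintro _ ⟨c, rfl⟩
  exact E.algebraMap_mem c

variable {n : ℕ} {E : Subfield (Amb k0 r)}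

theorem kfld_le (hk : baseSet k0 r ⊆ E) (hX : ∀ i, 1 ≤ i → i ≤ n → ambX k0 r i ∈ E) :
    kfld k0 r n ≤ E := by
  refine Subfield.closure_le.mpr (Set.union_subset hk ?_)
  rintro _ ⟨i, hi, hin, rfl⟩
  exact hX i hi hin

theorem Ffld_le (hk : kfld k0 r n ≤ E) (hZ : ∀ i, ambZ k0 r i ∈ E) : Ffld k0 r n ≤ E :=
  Subfield.closure_le.mpr (Set.union_subset hk (Set.range_subset_iff.mpr hZ))

theorem Kfld_le (hF : Ffld k0 r n ≤ E) (hY : ambY k0 r ∈ E) : Kfld k0 r n ≤ E :=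
  Subfield.closure_le.mpr (Set.union_subset hF (Set.singleton_subset_iff.mpr hY))

variable (k0 r)

theorem kfld_le_Ffld (n : ℕ) : kfld k0 r n ≤ Ffld k0 r n :=
  fun _ hx => Subfield.subset_closure (Or.inl hx)

theorem Ffld_le_Kfld (n : ℕ) : Ffld k0 r n ≤ Kfld k0 r n :=
  fun _ hx => Subfield.subset_closure (Or.inl hx)

theorem ambX_mem_kfld {i : ℕ} (hi : 1 ≤ i) (hin : i ≤ n) : ambX k0 r i ∈ kfld k0 r n :=
  Subfield.subset_closure (Or.inr ⟨i, hi, hin, rfl⟩)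

theorem ambZ_mem_Ffld (n : ℕ) (i : Fin (r - 1)) : ambZ k0 r i ∈ Ffld k0 r n :=
  Subfield.subset_closure (Or.inr ⟨i, rfl⟩)

theorem ambY_mem_Kfld (n : ℕ) : ambY k0 r ∈ Kfld k0 r n :=
  Subfield.subset_closure (Or.inr rfl)

theorem kfld_mono : Monotone (kfld k0 r) := fun _ _ h =>
  kfld_le (fun _ hx => Subfield.subset_closure (Or.inl hx)) fun _ hi hin =>
    ambX_mem_kfld k0 r hi (hin.trans h)

theorem Ffld_mono : Monotone (Ffld k0 r) := fun _ n h =>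
  Ffld_le ((kfld_mono k0 r h).trans (kfld_le_Ffld k0 r n)) (ambZ_mem_Ffld k0 r n)

theorem Kfld_mono : Monotone (Kfld k0 r) := fun _ n h =>
  Kfld_le ((Ffld_mono k0 r h).trans (Ffld_le_Kfld k0 r n)) (ambY_mem_Kfld k0 r n)

theorem ambY_ne_zero : ambY k0 r ≠ 0 :=
  (algebraicIndependent_ambVar k0 r).ne_zero (Sum.inr (Sum.inl ()))

theorem ambX'_eq (n : ℕ) : ambX' k0 r n = (ambY k0 r)⁻¹ + ambX k0 r n := by
  rw [ambX', add_div, mul_div_cancel_left₀ _ (ambY_ne_zero k0 r), one_div]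

theorem transcendental_ambY (n : ℕ) : Transcendental (Ffld k0 r n) (ambY k0 r) :=
  transcendental_of_le_toSubring (R := (Ffld k0 r n).toSubring)
    (Ffld_le (E := (ambFieldWithout k0 r (Sum.inr (Sum.inl ()))).toSubfield)
      (kfld_le (baseSet_subset _) fun _ _ _ => ambVar_mem_ambFieldWithout (by simp))
      fun _ => ambVar_mem_ambFieldWithout (by simp))
    (transcendental_ambVar (Sum.inr (Sum.inl ())))

theorem transcendental_ambX' (n : ℕ) : Transcendental (Kfld k0 r n) (ambX' k0 r (n + 1)) := by
  set E := ambFieldWithout k0 r (Sum.inl (n + 1))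
  have hY : ambY k0 r ∈ E := ambVar_mem_ambFieldWithout (by simp)
  have hX' : Transcendental E (ambX' k0 r (n + 1)) := fun h => by
    refine transcendental_ambVar (k0 := k0) (r := r) (Sum.inl (n + 1)) ?_
    have hYinv : IsAlgebraic E (ambY k0 r)⁻¹ :=
      isAlgebraic_algebraMap (⟨_, E.inv_mem hY⟩ : E)
    have hsub := h.sub hYinv
    rwa [ambX'_eq, add_sub_cancel_left] at hsub
  refine transcendental_of_le_toSubring (R := (Kfld k0 r n).toSubring)
    (Kfld_le (E := E.toSubfield) (Ffld_le (kfld_le (baseSet_subset _) fun i _ hi => ?_)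
      fun _ => ambVar_mem_ambFieldWithout (by simp)) hY) hX'
  exact ambVar_mem_ambFieldWithout (by simp; lia)

theorem Kfld_succ (n : ℕ) :
    Kfld k0 r (n + 1) = (Kfld k0 r n)⟮ambX' k0 r (n + 1)⟯.toSubfield := by
  have hle : Kfld k0 r n ≤ (Kfld k0 r n)⟮ambX' k0 r (n + 1)⟯.toSubfield := fun x hx =>
    (Kfld k0 r n)⟮ambX' k0 r (n + 1)⟯.algebraMap_mem ⟨x, hx⟩
  have hkK : ∀ m, kfld k0 r m ≤ Kfld k0 r m := fun m =>
    (kfld_le_Ffld k0 r m).trans (Ffld_le_Kfld k0 r m)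
  have hY := hle (ambY_mem_Kfld k0 r n)
  apply le_antisymm
  · refine Kfld_le (Ffld_le (kfld_le ?_ fun i hi hin => ?_) fun i => ?_) hY
    · exact fun x hx => hle (hkK n (Subfield.subset_closure (Or.inl hx)))
    · rcases Nat.le_succ_iff.mp hin with hin | rfl
      · exact hle (hkK n (ambX_mem_kfld k0 r hi hin))
      · rw [← add_sub_cancel_left (ambY k0 r)⁻¹ (ambX k0 r (n + 1)), ← ambX'_eq]
        exact sub_mem (mem_adjoin_simple_self _ _) (inv_mem hY)
    · exact hle (Ffld_le_Kfld k0 r n (ambZ_mem_Ffld k0 r n i))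
  · rw [IntermediateField.adjoin_toSubfield]
    refine Subfield.closure_le.mpr (Set.union_subset ?_ (Set.singleton_subset_iff.mpr ?_))
    · rintro _ ⟨x, rfl⟩
      exact Kfld_mono k0 r n.le_succ x.2
    · rw [ambX'_eq]
      exact add_mem (inv_mem (ambY_mem_Kfld k0 r _))
        (hkK _ (ambX_mem_kfld k0 r n.succ_pos le_rfl))

theorem Kfld_le_adjoin (n : ℕ) : Kfld k0 r n ≤
    (IntermediateField.adjoin (kfld k0 r n) (Set.range (ambZ k0 r) ∪ {ambY k0 r})).toSubfield :=
  Kfld_le (Ffld_le (fun x hx => IntermediateField.algebraMap_mem _ (⟨x, hx⟩ : kfld k0 r n))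
    fun i => IntermediateField.subset_adjoin _ _ (Or.inl ⟨i, rfl⟩))
    (IntermediateField.subset_adjoin _ _ (Or.inr rfl))

theorem exists_mem_Kfld {x : Amb k0 r} (hx : x ∈ KfldU k0 r) : ∃ n, x ∈ Kfld k0 r (n + 1) := by
  have hmono : Monotone fun n => Kfld k0 r (n + 1) := fun _ _ h =>
    Kfld_mono k0 r (Nat.succ_le_succ h)
  rw [← Subfield.mem_iSup_of_directed hmono.directed_le]
  refine Subfield.closure_le.mpr (Set.union_subset (Subfield.closure_le.mpr
    (Set.union_subset (Set.iUnion_subset fun n x hx => ?_) ?_)) ?_) hx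
  · exact le_iSup (fun n => Kfld k0 r (n + 1)) n (Ffld_le_Kfld k0 r _
      (kfld_le_Ffld k0 r _ (kfld_mono k0 r n.le_succ hx)))
  · rintro _ ⟨i, rfl⟩
    exact le_iSup (fun n => Kfld k0 r (n + 1)) 0 (Ffld_le_Kfld k0 r _ (ambZ_mem_Ffld k0 r 1 i))
  · exact Set.singleton_subset_iff.mpr
      (le_iSup (fun n => Kfld k0 r (n + 1)) 0 (ambY_mem_Kfld k0 r 1))

variable {r} in
theorem mk_range_ambZ_union_le (hr : 1 ≤ r) :
    Cardinal.mk ↥(Set.range (ambZ k0 r) ∪ {ambY k0 r}) ≤ r := by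
  refine (Cardinal.mk_union_le _ _).trans ?_
  calc Cardinal.mk (Set.range (ambZ k0 r)) + Cardinal.mk ({ambY k0 r} : Set (Amb k0 r))
      ≤ Cardinal.mk (Fin (r - 1)) + 1 := add_le_add Cardinal.mk_range_le (by simp)
    _ = r := by rw [Cardinal.mk_fin]; exact_mod_cast Nat.sub_add_cancel hr

end Ambient

section AmbientTower

variable (k0 : Type) [Field k0] (r : ℕ)

/-- The local ring `Vₙ = Fₙ[Y]_{(Y)}`. -/
abbrev ambV (n : ℕ) : LocalSubring (Amb k0 r) :=
  adicRing (transcendental_ambY k0 r n)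

theorem Ffld_le_ambV (n : ℕ) : (Ffld k0 r n).toSubring ≤ (ambV k0 r n).toSubring := fun _ hx =>
  polynomialSubring_le_adicRing _ (mem_polynomialSubring_of_mem hx)

theorem kfld_le_ambV (n : ℕ) : (kfld k0 r n).toSubring ≤ (ambV k0 r n).toSubring :=
  fun _ hx => Ffld_le_ambV k0 r n (kfld_le_Ffld k0 r n hx)

/-- The local ring `Aₙ = kₙ + Mₙ`. -/
def ambA (n : ℕ) : LocalSubring (Amb k0 r) :=
  fieldAddMaximalIdeal (ambV k0 r n) (kfld k0 r n) (kfld_le_ambV k0 r n)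

theorem Vset_eq_ambV (n : ℕ) : Vset k0 r n = (ambV k0 r n).toSubring :=
  Set.ext fun _ => (mem_adicRing (transcendental_ambY k0 r n)).symm

theorem Mset_eq_maximalIdealSet_ambV (n : ℕ) : Mset k0 r n = maximalIdealSet (ambV k0 r n) := by
  ext x
  rw [mem_maximalIdealSet_adicRing, Mset, Vset_eq_ambV]
  rfl

theorem Mset_eq_maximalIdealSet_ambA (n : ℕ) : Mset k0 r n = maximalIdealSet (ambA k0 r n) :=
  (Mset_eq_maximalIdealSet_ambV k0 r n).trans (maximalIdealSet_fieldAddMaximalIdeal _).symm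

theorem Aset_eq_ambA (n : ℕ) : Aset k0 r n = (ambA k0 r n).toSubring := by
  rw [Aset, Mset_eq_maximalIdealSet_ambV]
  rfl

theorem ambA_mono : Monotone (ambA k0 r) := fun _ _ h =>
  fieldAddMaximalIdeal_mono _ _ (kfld_mono k0 r h) (adicRing_mono _ _ (Ffld_mono k0 r h))

theorem isKroneckerStep_ambA (n : ℕ) :
    IsKroneckerStep (ambA k0 r (n + 1)) (Kfld k0 r n) (ambX' k0 r (n + 1)) :=
  isKroneckerStep_fieldAddMaximalIdeal _ (ambY_ne_zero k0 r)
    (fun _ => mem_maximalIdealSet_adicRing _)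
    (kfld_le_ambV k0 r _ (ambX_mem_kfld k0 r n.succ_pos le_rfl)) rfl (transcendental_ambX' k0 r n)
    (Kfld_succ k0 r n ▸ adicRing_le _)
    fun x hx => exists_pow_mul_mem_adicRing _ (show x ∈ Kfld k0 r (n + 1) from
      (Kfld_succ k0 r n).symm ▸ hx)

theorem isKroneckerTower_amb : IsKroneckerTower (fun n => ambA k0 r (n + 1))
    (fun n => Kfld k0 r (n + 1)) (fun n => ambX' k0 r (n + 2)) where
  mono _ _ h := ambA_mono k0 r (Nat.succ_le_succ h)
  base_le := (fieldAddMaximalIdeal_le _).1.trans (adicRing_le _)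
  field_succ n := Kfld_succ k0 r (n + 1)
  step n := isKroneckerStep_ambA k0 r (n + 1)

end AmbientTower

section AmbientSets

variable {k0 : Type} [Field k0] {r : ℕ}

theorem exists_sum_mul_eq_one_iff_exists_isUnit {ι : Type*} (W : LocalSubring L)
    (c : ι → W.toSubring) : (∃ (t : Finset ι) (u : ι → L),
      (∀ i ∈ t, u i ∈ W.toSubring) ∧ ∑ i ∈ t, u i * c i = 1) ↔ ∃ i, IsUnit (c i) := by
  constructor
  · rintro ⟨t, u, hu, hsum⟩
    by_contra! hc
    refine one_notMem_maximalIdealSet (A := W) (hsum ▸ Finset.sum_induction _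
      (· ∈ maximalIdealSet W) (fun _ _ => add_mem_maximalIdealSet) zero_mem_maximalIdealSet ?_)
    exact fun i hi => mul_mem_maximalIdealSet (hu i hi) ⟨c i, hc i, rfl⟩
  · rintro ⟨i, hi⟩
    obtain ⟨hi0, hinv⟩ := (isUnit_mk_iff (c i).2).mp hi
    exact ⟨{i}, fun _ => (c i : L)⁻¹, fun _ _ => hinv, by simp [inv_mul_cancel₀ hi0]⟩

theorem nagataSet_eq_nagataRing (W : LocalSubring (Amb k0 r)) {T : Amb k0 r} :
    nagataSet k0 r W.toSubring T = nagataRing W.toSubring T := by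
  have hunit : ∀ g : W.toSubring[X], unitContent k0 r W.toSubring
      (g.map (algebraMap W.toSubring (Amb k0 r))) ↔ g.contentIdeal = ⊤ := fun g => by
    have hcontent := exists_sum_mul_eq_one_iff_exists_isUnit W g.coeff
    simp only [unitContent, coeff_map]
    exact hcontent.trans ⟨fun ⟨_, h⟩ => contentIdeal_eq_top_of_isUnit_coeff h,
      exists_isUnit_coeff_of_contentIdeal_eq_top⟩
  ext x
  constructor
  · rintro ⟨f, g, hf, hg, hg1, rfl⟩
    obtain ⟨f, rfl⟩ := (lifts_iff_coeff_lifts (f := algebraMap W.toSubring _) f).mpr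
      fun i => ⟨⟨_, hf i⟩, rfl⟩
    obtain ⟨g, rfl⟩ := (lifts_iff_coeff_lifts (f := algebraMap W.toSubring _) g).mpr
      fun i => ⟨⟨_, hg i⟩, rfl⟩
    simp only [coe_mapRingHom, eval_map_algebraMap] at hg1 ⊢
    by_cases hT : aeval T g = 0
    · simp [hT]
    · exact ⟨f, g, (hunit g).mp hg1, hT, rfl⟩
  · rintro ⟨f, g, hg, -, rfl⟩
    refine ⟨f.map (algebraMap _ _), g.map (algebraMap _ _), fun i => ?_, fun i => ?_,
      (hunit g).mpr hg, by simp only [eval_map_algebraMap]⟩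
    · exact coeff_map (algebraMap W.toSubring (Amb k0 r)) i ▸ (f.coeff i).2
    · exact coeff_map (algebraMap W.toSubring (Amb k0 r)) i ▸ (g.coeff i).2

theorem mem_nagataSetMv (W : LocalSubring (Amb k0 r)) {T : ℕ → Amb k0 r} {x : Amb k0 r} :
    x ∈ nagataSetMv k0 r W.toSubring T ↔ ∃ f g : MvPolynomial ℕ W.toSubring,
      (∃ m, IsUnit (MvPolynomial.coeff m g)) ∧
      x = MvPolynomial.aeval T f / MvPolynomial.aeval T g := by
  have hunit : ∀ g : MvPolynomial ℕ W.toSubring, mvUnitContent k0 r W.toSubring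
      (MvPolynomial.map (algebraMap W.toSubring (Amb k0 r)) g) ↔
        ∃ m, IsUnit (MvPolynomial.coeff m g) := fun g => by
    have hcontent := exists_sum_mul_eq_one_iff_exists_isUnit W fun m => MvPolynomial.coeff m g
    simp only [mvUnitContent, MvPolynomial.coeff_map]
    exact hcontent
  have heval : ∀ g : MvPolynomial ℕ W.toSubring,
      MvPolynomial.eval T (MvPolynomial.map (algebraMap W.toSubring (Amb k0 r)) g) =
        MvPolynomial.aeval T g := fun g => by
    rw [MvPolynomial.aeval_def, MvPolynomial.eval₂_eq_eval_map]
  have hlift : ∀ f : MvPolynomial ℕ (Amb k0 r), (∀ m, MvPolynomial.coeff m f ∈ W.toSubring) →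
      ∃ f', MvPolynomial.map (algebraMap W.toSubring (Amb k0 r)) f' = f := fun f hf =>
    MvPolynomial.mem_range_map_iff_coeffs_subset.mpr fun c hc => by
      obtain ⟨m, -, rfl⟩ := MvPolynomial.mem_coeffs_iff.mp hc
      exact ⟨⟨_, hf m⟩, rfl⟩
  constructor
  · rintro ⟨f, g, hf, hg, hg1, rfl⟩
    obtain ⟨f, rfl⟩ := hlift f hf
    obtain ⟨g, rfl⟩ := hlift g hg
    exact ⟨f, g, (hunit g).mp hg1, by simp only [heval]⟩
  · rintro ⟨f, g, hg, rfl⟩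
    refine ⟨MvPolynomial.map (algebraMap _ _) f, MvPolynomial.map (algebraMap _ _) g,
      fun m => ?_, fun m => ?_, (hunit g).mpr hg, by simp only [heval]⟩
    · exact MvPolynomial.coeff_map (algebraMap W.toSubring (Amb k0 r)) f m ▸ Subtype.prop _
    · exact MvPolynomial.coeff_map (algebraMap W.toSubring (Amb k0 r)) g m ▸ Subtype.prop _

theorem krSet_eq_kroneckerRing (D : Subring (Amb k0 r)) (K : Subfield (Amb k0 r)) (T : Amb k0 r) :
    krSet k0 r D K T = kroneckerRing D K T := by
  ext x
  refine Set.mem_iInter₂.trans (Iff.trans ?_ mem_kroneckerRing.symm)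
  have hmem : ∀ {W : Subring (Amb k0 r)}, IsValuationRingOf W K →
      (x ∈ nagataSet k0 r W T ↔ x ∈ nagataRing W T) := fun {W} hW =>
    Set.ext_iff.mp (nagataSet_eq_nagataRing
      { toSubring := W, isLocalRing := hW.isLocalRing }) x
  exact ⟨fun h W hW hD => (hmem hW).mp (h W ⟨hD, hW.le, hW.mem_or_inv_mem⟩),
    fun h W ⟨hD, hle, hval⟩ => (hmem ⟨hle, hval⟩).mpr (h W ⟨hle, hval⟩ hD)⟩

theorem locAt_eq_ofPrime {D : Subring (Amb k0 r)} (q : Ideal D) [q.IsPrime] :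
    locAt k0 r D (Subtype.val '' (q : Set D)) = (LocalSubring.ofPrime D q).toSubring := by
  ext x
  refine Iff.trans ?_ mem_ofPrime_iff.symm
  constructor
  · rintro ⟨a, ha, b, hb, hbq, rfl⟩
    exact ⟨⟨a, ha⟩, ⟨b, hb⟩, fun h => hbq ⟨_, h, rfl⟩, rfl⟩
  · rintro ⟨a, b, hb, rfl⟩
    exact ⟨a, a.2, b, b.2, fun ⟨_, hq, hval⟩ => hb (Subtype.ext hval ▸ hq), rfl⟩

end AmbientSets

section AmbientLimit

variable (k0 : Type) [Field k0] (r : ℕ)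

/-- The ring `Dₙ₊₁`, the `n`-th ring of the Kronecker tower in the ambient field. -/
abbrev ambD (n : ℕ) : Subring (Amb k0 r) :=
  towerRing (fun n => ambA k0 r (n + 1)) (fun n => Kfld k0 r (n + 1))
    (fun n => ambX' k0 r (n + 2)) n

/-- The ring `D`, the union of the tower. -/
abbrev ambDLimit : Subring (Amb k0 r) :=
  towerLimit (fun n => ambA k0 r (n + 1)) (fun n => Kfld k0 r (n + 1))
    (fun n => ambX' k0 r (n + 2))

/-- The ideal `𝓜ₙ₊₁` of `Dₙ₊₁`. -/
abbrev ambM (n : ℕ) : Ideal (ambD k0 r n) :=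
  towerIdeal (fun n => ambA k0 r (n + 1)) (fun n => Kfld k0 r (n + 1))
    (fun n => ambX' k0 r (n + 2)) n

theorem Dset_succ_eq_ambD (n : ℕ) : Dset k0 r (n + 1) = ambD k0 r n := by
  induction n with
  | zero => exact Aset_eq_ambA k0 r 1
  | succ n ih =>
    rw [Dset, ih, krSet_eq_kroneckerRing, Aset_eq_ambA, Set.inter_comm]
    rfl

theorem DsetU_eq_ambDLimit : DsetU k0 r = ambDLimit k0 r := by
  ext x
  refine Set.mem_iUnion.trans (Iff.trans ?_ (isKroneckerTower_amb k0 r).mem_towerLimit.symm)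
  simp only [← SetLike.mem_coe, ← Dset_succ_eq_ambD]
  constructor
  · rintro ⟨_ | n, hn⟩
    · exact ⟨0, hn⟩
    · exact ⟨n, hn⟩
  · rintro ⟨n, hn⟩
    exact ⟨n + 1, hn⟩

theorem MMset_succ_eq_ambM (n : ℕ) :
    MMset k0 r (n + 1) = Subtype.val '' (ambM k0 r n : Set (ambD k0 r n)) := by
  rw [MMset, Mset_eq_maximalIdealSet_ambA, Dset_succ_eq_ambD]
  ext x
  constructor
  · rintro ⟨hx, hxD⟩
    exact ⟨⟨x, hxD⟩, (mk_mem_maximalIdeal_iff _).mpr hx, rfl⟩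
  · rintro ⟨x, hx, rfl⟩
    exact ⟨(mk_mem_maximalIdeal_iff _).mp hx, x.2⟩

variable {k0 r} (q : Ideal (ambDLimit k0 r))

theorem image_inter_Dset_succ (n : ℕ) :
    Subtype.val '' (q : Set (ambDLimit k0 r)) ∩ Dset k0 r (n + 1) =
      Subtype.val '' (towerContraction q n : Set (ambD k0 r n)) := by
  rw [Dset_succ_eq_ambD]
  ext x
  constructor
  · rintro ⟨⟨x, hx, rfl⟩, hxD⟩
    exact ⟨⟨x, hxD⟩, hx, rfl⟩
  · rintro ⟨x, hx, rfl⟩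
    exact ⟨⟨_, hx, rfl⟩, x.2⟩

theorem image_inter_Dset_ne_MMset_iff (n : ℕ) :
    Subtype.val '' (q : Set (ambDLimit k0 r)) ∩ Dset k0 r (n + 1) ≠ MMset k0 r (n + 1) ↔
      towerContraction q n ≠ ambM k0 r n := by
  rw [image_inter_Dset_succ, MMset_succ_eq_ambM,
    (Set.image_injective.mpr Subtype.val_injective).ne_iff, SetLike.coe_injective.ne_iff]

variable {q}

theorem exists_towerContraction_ne
    (hq : Subtype.val '' (q : Set (ambDLimit k0 r)) ≠ MMsetU k0 r) :
    ∃ n, towerContraction q (n + 1) ≠ ambM k0 r (n + 1) := by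
  simp only [← image_inter_Dset_ne_MMset_iff]
  contrapose! hq
  have hU : Subtype.val '' (q : Set (ambDLimit k0 r)) ⊆ ⋃ n, Dset k0 r (n + 1 + 1) := by
    rintro _ ⟨x, -, rfl⟩
    obtain ⟨n, hn⟩ := (isKroneckerTower_amb k0 r).mem_towerLimit.mp x.2
    refine Set.mem_iUnion.mpr ⟨n, ?_⟩
    rw [Dset_succ_eq_ambD]
    exact (isKroneckerTower_amb k0 r).towerRing_le_succ n hn
  rw [← Set.inter_eq_left.mpr hU, Set.inter_iUnion, Set.iUnion_congr hq, MMsetU]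

variable [q.IsPrime]

theorem locAt_inter_Dset_succ (n : ℕ) :
    locAt k0 r (Dset k0 r (n + 1))
        (Subtype.val '' (q : Set (ambDLimit k0 r)) ∩ Dset k0 r (n + 1)) =
      (towerLocalization q n).toSubring := by
  have := Ideal.comap_isPrime (Subring.inclusion (towerRing_le_towerLimit n)) q
  rw [image_inter_Dset_succ, Dset_succ_eq_ambD]
  exact locAt_eq_ofPrime (towerContraction q n)

theorem ofPrime_eq_nagataSetMv {n : ℕ} (hq : towerContraction q (n + 1) ≠ ambM k0 r (n + 1)) :
    (LocalSubring.ofPrime _ q).toSubring =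
      nagataSetMv k0 r (towerLocalization q (n + 1)).toSubring
        fun j => ambX' k0 r (n + 2 + 1 + j) := by
  ext x
  refine ((isKroneckerTower_amb k0 r).isNagataTower hq).mem_iff.trans
    (Iff.trans ?_ (mem_nagataSetMv (towerLocalization q (n + 1))).symm)
  simp only [show ∀ j, n + 1 + j + 2 = n + 2 + 1 + j by lia]

theorem mem_or_inv_mem_of_mem_KfldU {n : ℕ}
    (hq : towerContraction q (n + 1) ≠ ambM k0 r (n + 1)) {x : Amb k0 r} (hx : x ∈ KfldU k0 r) :
    x ∈ (LocalSubring.ofPrime _ q).toSubring ∨ x⁻¹ ∈ (LocalSubring.ofPrime _ q).toSubring :=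
  have ⟨_, hm⟩ := exists_mem_Kfld k0 r hx
  (isKroneckerTower_amb k0 r).mem_or_inv_mem_ofPrime hq hm

theorem ringKrullDim_ofPrime_ambDLimit_le (hr : 1 ≤ r) {n : ℕ}
    (hq : towerContraction q (n + 1) ≠ ambM k0 r (n + 1)) :
    ringKrullDim (LocalSubring.ofPrime _ q).toSubring ≤ r :=
  (isKroneckerTower_amb k0 r).ringKrullDim_ofPrime_le hq
    (fun n => le_fieldAddMaximalIdeal (kfld_le_ambV k0 r (n + 1)))
    (fun n => Kfld_le_adjoin k0 r (n + 1)) (mk_range_ambZ_union_le k0 hr)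

end AmbientLimit

end

/-- In the tower construction with `D := ⋃_{n ≥ 1} Dₙ` and
`𝓜 := ⋃_{n ≥ 2} 𝓜ₙ`: for every prime `q` of `D` with `q ≠ 𝓜`, the localization
`D_q` is a valuation domain (of the quotient field `K` of `D`) of Krull dimension
`≤ r`; more precisely, for any `m ≥ 2` with `q ∩ D_m ≠ 𝓜_m`, one has
`D_q = (D_m)_{q_m}(X′_{m+1}, X′_{m+2}, …)`, the Nagata ring of `(D_m)_{q_m}` in the
variables `X′_{m+1}, X′_{m+2}, …`. -/
theorem tower_localizations_of_D_are_valuation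
    (k0 : Type) [Field k0] (r : ℕ) (hr : 2 ≤ r) :
    ∀ D' : Subring (Amb k0 r), (D' : Set (Amb k0 r)) = DsetU k0 r →
      ∀ q : Ideal ↥D', q.IsPrime → Subtype.val '' (q : Set ↥D') ≠ MMsetU k0 r →
        (∀ Vq : Subring (Amb k0 r),
          (Vq : Set (Amb k0 r)) =
              locAt k0 r (DsetU k0 r) (Subtype.val '' (q : Set ↥D')) →
          (∀ x ∈ KfldU k0 r, x ∈ Vq ∨ x⁻¹ ∈ Vq) ∧
          ringKrullDim ↥Vq ≤ (r : WithBot ℕ∞)) ∧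
        ∀ m : ℕ, 2 ≤ m →
          Subtype.val '' (q : Set ↥D') ∩ Dset k0 r m ≠ MMset k0 r m →
          locAt k0 r (DsetU k0 r) (Subtype.val '' (q : Set ↥D')) =
            nagataSetMv k0 r
              (locAt k0 r (Dset k0 r m) (Subtype.val '' (q : Set ↥D') ∩ Dset k0 r m))
              (fun j => ambX' k0 r (m + 1 + j)) := by
  intro D' hD' q hq hqM
  obtain rfl : D' = ambDLimit k0 r :=
    SetLike.coe_injective (hD'.trans (DsetU_eq_ambDLimit k0 r))
  rw [← hD', locAt_eq_ofPrime q]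
  refine ⟨fun Vq hVq => ?_, fun m hm hqm => ?_⟩
  · obtain rfl : Vq = (LocalSubring.ofPrime _ q).toSubring := SetLike.coe_injective hVq
    obtain ⟨n, hn⟩ := exists_towerContraction_ne hqM
    exact ⟨fun _ => mem_or_inv_mem_of_mem_KfldU hn,
      ringKrullDim_ofPrime_ambDLimit_le (one_le_two.trans hr) hn⟩
  · obtain ⟨n, rfl⟩ := Nat.exists_eq_add_of_le' hm
    rw [locAt_inter_Dset_succ]
    exact ofPrime_eq_nagataSetMv ((image_inter_Dset_ne_MMset_iff q (n + 1)).mp hqm)
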